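/- arXiv:math/0611488 — 2 statements merged into one kernel-verified Lean document; each statement's English description precedes it below -/
import Mathlib

section
/- Suppose every homogeneous ideal of k[x_1,...,x_{n−1}] containing a regular sequence of degrees a_1,...,a_r has the same Hilbert function as an ideal containing x_1^{a_1},...,x_r^{a_r}. Then the same statement holds in k[x_1,...,x_n]: any homogeneous ideal containing a homogeneous regular sequence of degrees a_1,...,a_r has the same Hilbert function as an ideal containing x_1^{a_1},...,x_r^{a_r}. -/
open MvPolynomial

/-- Hilbert function of a homogeneous ideal `I`: the `K`-dimension of its degree-`d` piece. -/
noncomputable def hilb {K : Type} [Field K] {n : ℕ}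
    (I : Ideal (MvPolynomial (Fin n) K)) (d : ℕ) : ℕ :=
  Module.finrank K ↥(Submodule.restrictScalars K I ⊓ homogeneousSubmodule (Fin n) K d)

/-- Hilbert function of the quotient `S/I` in degree `d`. -/
noncomputable def hilbQ {K : Type} [Field K] {n : ℕ}
    (I : Ideal (MvPolynomial (Fin n) K)) (d : ℕ) : ℕ :=
  Module.finrank K
    ((homogeneousSubmodule (Fin n) K d).map (Ideal.Quotient.mkₐ K I).toLinearMap)

/-- A homogeneous ideal: closed under taking homogeneous components. -/
def IsHomog {K : Type} [Field K] {n : ℕ} (I : Ideal (MvPolynomial (Fin n) K)) : Prop :=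
  ∀ f ∈ I, ∀ d : ℕ, homogeneousComponent d f ∈ I

/-- `f 0, ..., f (r-1)` is a regular sequence: it generates a proper ideal and each `f i`
is a nonzerodivisor modulo the ideal generated by the previous elements. -/
def IsRegSeq {K : Type} [Field K] {n r : ℕ} (f : Fin r → MvPolynomial (Fin n) K) : Prop :=
  Ideal.span (Set.range f) ≠ ⊤ ∧
  ∀ i : Fin r, ∀ g : MvPolynomial (Fin n) K,
    f i * g ∈ Ideal.span (f '' {j : Fin r | j < i}) →
      g ∈ Ideal.span (f '' {j : Fin r | j < i})

/-- A monomial ideal: generated by monomials. -/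
def IsMonomialIdeal {K : Type} [Field K] {n : ℕ} (I : Ideal (MvPolynomial (Fin n) K)) : Prop :=
  ∃ T : Set (Fin n →₀ ℕ), I = Ideal.span ((fun u => monomial u (1 : K)) '' T)

/-- `x^v` is lexicographically greater than `x^u` (for `x_0 > x_1 > ... > x_{n-1}`). -/
def lexGT {n : ℕ} (v u : Fin n →₀ ℕ) : Prop :=
  ∃ i : Fin n, u i < v i ∧ ∀ j : Fin n, j < i → v j = u j
/-- `EGHnr K n r h a`: every homogeneous ideal of `K[x_1,...,x_n]` containing a homogeneous
regular sequence of length `r` and degrees `a 0, ..., a (r-1)` has the same Hilbert function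
as some ideal containing the pure powers `x_i^{a i}` for `1 ≤ i ≤ r`. -/
def EGHnr (K : Type) [Field K] (n r : ℕ) (h : r ≤ n) (a : Fin r → ℕ) : Prop :=
  ∀ I : Ideal (MvPolynomial (Fin n) K), IsHomog I →
    (∃ f : Fin r → MvPolynomial (Fin n) K,
      IsRegSeq f ∧ (∀ i, (f i).IsHomogeneous (a i)) ∧ ∀ i, f i ∈ I) →
    ∃ J : Ideal (MvPolynomial (Fin n) K),
      (∀ i : Fin r, (X (Fin.castLE h i) : MvPolynomial (Fin n) K) ^ a i ∈ J) ∧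
      ∀ d : ℕ, hilb I d = hilb J d


section Seg
variable {α β : Type*} [LinearOrder β] (k : α → β)

/-- `L` is an initial (upper) segment of `X` with respect to the order given by the key `k`. -/
def UpSeg (X L : Finset α) : Prop :=
  L ⊆ X ∧ ∀ y ∈ L, ∀ x ∈ X, k y < k x → x ∈ L

/-- the upper segment of size `s` -/
noncomputable def topSeg (X : Finset α) (s : ℕ) : Finset α :=
  open Classical in X.filter (fun u => (X.filter (fun w => k u < k w)).card < s)

lemma topSeg_upSeg (X : Finset α) (s : ℕ) : UpSeg k X (topSeg k X s) := by
  classical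
  refine ⟨Finset.filter_subset _ _, ?_⟩
  intro y hy x hx hxy
  simp only [topSeg, Finset.mem_filter] at hy ⊢
  refine ⟨hx, lt_of_le_of_lt (Finset.card_le_card ?_) hy.2⟩
  intro w hw
  simp only [Finset.mem_filter] at hw ⊢
  exact ⟨hw.1, hxy.trans hw.2⟩

lemma topSeg_mono (X : Finset α) {s t : ℕ} (h : s ≤ t) : topSeg k X s ⊆ topSeg k X t := by
  classical
  intro y hy
  simp only [topSeg, Finset.mem_filter] at hy ⊢
  exact ⟨hy.1, hy.2.trans_le h⟩

lemma UpSeg.subset_topSeg {X U : Finset α} (h : UpSeg k X U) {s : ℕ} (hs : U.card ≤ s) :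
    U ⊆ topSeg k X s := by
  classical
  intro u hu
  simp only [topSeg, Finset.mem_filter]
  refine ⟨h.1 hu, lt_of_lt_of_le (Finset.card_lt_card ?_) hs⟩
  refine Finset.ssubset_iff_of_subset ?_ |>.2 ⟨u, hu, by simp⟩
  intro w hw
  simp only [Finset.mem_filter] at hw
  exact h.2 u hu w hw.1 hw.2

variable {k}


lemma exists_upSeg (k : α → β) (X : Finset α) (s : ℕ) (hs : s ≤ X.card) :
    ∃ U, UpSeg k X U ∧ U.card = s := by
  classical
  induction s with
  | zero => exact ⟨∅, ⟨by simp, by simp⟩, by simp⟩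
  | succ s ih =>
    obtain ⟨U, hU, hc⟩ := ih (by omega)
    have hne : (X \ U).Nonempty := by
      rw [← Finset.card_pos, Finset.card_sdiff_of_subset hU.1]; omega
    obtain ⟨m, hm, hmax⟩ := Finset.exists_max_image (X \ U) k hne
    simp only [Finset.mem_sdiff] at hm hmax
    refine ⟨insert m U, ⟨?_, ?_⟩, by rw [Finset.card_insert_of_notMem hm.2, hc]⟩
    · intro x hx
      rcases Finset.mem_insert.1 hx with rfl | hx
      · exact hm.1
      · exact hU.1 hx
    · intro y hy x hx hyx
      rcases Finset.mem_insert.1 hy with rfl | hy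
      · by_contra hc
        exact absurd (hmax x ⟨hx, fun h => hc (Finset.mem_insert_of_mem h)⟩) (not_le.2 hyx)
      · exact Finset.mem_insert_of_mem (hU.2 y hy x hx hyx)

lemma UpSeg.eq_topSeg (hk : Function.Injective k) {X U : Finset α} (h : UpSeg k X U) : U = topSeg k X U.card := by
  classical
  refine Finset.Subset.antisymm (h.subset_topSeg k le_rfl) ?_
  intro u hu
  simp only [topSeg, Finset.mem_filter] at hu
  by_contra hc
  refine absurd hu.2 (not_lt.2 (Finset.card_le_card ?_))
  intro w hw
  simp only [Finset.mem_filter]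
  refine ⟨h.1 hw, ?_⟩
  rcases lt_trichotomy (k u) (k w) with h1 | h1 | h1
  · exact h1
  · exact absurd (hk h1 ▸ hw) hc
  · exact absurd (h.2 w hw u hu.1 h1) hc

lemma card_topSeg (hk : Function.Injective k) (X : Finset α) (s : ℕ) (hs : s ≤ X.card) : (topSeg k X s).card = s := by
  obtain ⟨U, hU, hc⟩ := exists_upSeg k X s hs
  have := hU.eq_topSeg hk
  rw [hc] at this
  rw [← this, hc]

lemma UpSeg.subset_of_card_le (hk : Function.Injective k) {X U V : Finset α} (hU : UpSeg k X U) (hV : UpSeg k X V)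
    (h : U.card ≤ V.card) : U ⊆ V := by
  rw [hV.eq_topSeg hk]; exact hU.subset_topSeg k h

lemma UpSeg.card_union_le (hk : Function.Injective k) {X U V : Finset α} [DecidableEq α] (hU : UpSeg k X U)
    (hV : UpSeg k X V) {s : ℕ} (h1 : U.card ≤ s) (h2 : V.card ≤ s) : (U ∪ V).card ≤ s := by
  rcases le_total U.card V.card with h | h
  · rw [Finset.union_eq_right.2 (hU.subset_of_card_le hk hV h)]; exact h2
  · rw [Finset.union_eq_left.2 (hV.subset_of_card_le hk hU h)]; exact h1

/-- replacing by an upper segment increases weight -/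
lemma UpSeg.sum_le (hk : Function.Injective k) {X U B : Finset α} (hU : UpSeg k X U) (hB : B ⊆ X) (hc : B.card = U.card)
    (f : α → ℕ) (hf : ∀ x ∈ X, ∀ y ∈ X, k x < k y → f x < f y) :
    ∑ x ∈ B, f x ≤ ∑ x ∈ U, f x ∧ (B ≠ U → ∑ x ∈ B, f x < ∑ x ∈ U, f x) := by
  classical
  by_cases hBU : B = U
  · subst hBU; simp
  have key : ∑ x ∈ B, f x < ∑ x ∈ U, f x := by
    have c1 : (B \ U).card = (U \ B).card := by
      have := Finset.card_sdiff_add_card_inter B U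
      have := Finset.card_sdiff_add_card_inter U B
      rw [Finset.inter_comm] at this
      omega
    have hne : (B \ U).Nonempty := by
      rw [Finset.sdiff_nonempty]
      intro h
      exact hBU (Finset.eq_of_subset_of_card_le h hc.ge)
    obtain ⟨m, hm, hmax⟩ := Finset.exists_max_image (B \ U) f hne
    rw [Finset.mem_sdiff] at hm
    have h1 : ∑ x ∈ B \ U, f x ≤ (B \ U).card * f m := by
      simpa using Finset.sum_le_card_nsmul (B \ U) f (f m) hmax
    have h2 : (U \ B).card * (f m + 1) ≤ ∑ x ∈ U \ B, f x := by
      rw [← smul_eq_mul]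
      refine Finset.card_nsmul_le_sum (U \ B) f (f m + 1) ?_
      intro x hx
      rw [Finset.mem_sdiff] at hx
      refine hf m (hB hm.1) x (hU.1 hx.1) ?_
      rcases lt_trichotomy (k m) (k x) with h1 | h1 | h1
      · exact h1
      · exact absurd (hk h1 ▸ hm.1) hx.2
      · exact absurd (hU.2 x hx.1 m (hB hm.1) h1) hm.2
    have h3 := Finset.sum_inter_add_sum_sdiff B U f
    have h4 := Finset.sum_inter_add_sum_sdiff U B f
    rw [Finset.inter_comm] at h4
    have h5 : 0 < (B \ U).card := Finset.card_pos.2 hne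
    rw [← c1] at h2
    nlinarith
  exact ⟨key.le, fun _ => key⟩

end Seg

section CL

/-- the lexicographic key -/
def lk {n : ℕ} (u : Fin n → ℕ) : Lex (Fin n → ℕ) := toLex u

lemma lk_inj {n : ℕ} : Function.Injective (lk (n := n)) := fun _ _ h => toLex.injective h

lemma lk_lt_iff {n : ℕ} {u v : Fin n → ℕ} :
    lk u < lk v ↔ ∃ i, (∀ j, j < i → u j = v j) ∧ u i < v i := Iff.rfl

/-- monomials of degree `d` with exponents bounded by `b` -/
def mbox {n : ℕ} (b : Fin n → ℕ) (d : ℕ) : Finset (Fin n → ℕ) :=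
  (Finset.Iic b).filter (fun u => ∑ i, u i = d)

/-- the upper shadow in the box -/
noncomputable def shad {n : ℕ} (b : Fin n → ℕ) (d : ℕ) (A : Finset (Fin n → ℕ)) :
    Finset (Fin n → ℕ) :=
  open Classical in (mbox b (d + 1)).filter (fun z => ∃ u ∈ A, u ≤ z)

lemma mem_mbox {n : ℕ} {b : Fin n → ℕ} {d : ℕ} {u : Fin n → ℕ} :
    u ∈ mbox b d ↔ u ≤ b ∧ ∑ i, u i = d := by
  simp [mbox]

lemma mem_shad {n : ℕ} {b : Fin n → ℕ} {d : ℕ} {A : Finset (Fin n → ℕ)} {z : Fin n → ℕ} :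
    z ∈ shad b d A ↔ z ∈ mbox b (d + 1) ∧ ∃ u ∈ A, u ≤ z := by
  simp [shad]

lemma shad_upSeg {n : ℕ} {b : Fin n → ℕ} {d : ℕ} {L : Finset (Fin n → ℕ)}
    (hL : UpSeg lk (mbox b d) L) : UpSeg lk (mbox b (d + 1)) (shad b d L) := by
  classical
  refine ⟨fun z hz => (mem_shad.1 hz).1, ?_⟩
  intro z hz z' hz' hlt
  obtain ⟨hz, u, hu, huz⟩ := mem_shad.1 hz
  refine mem_shad.2 ⟨hz', ?_⟩
  rw [mem_mbox] at hz hz'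
  have humem := mem_mbox.1 (hL.1 hu)
  -- last nonzero coordinate
  have hne : (Finset.univ.filter (fun i => z' i ≠ 0)).Nonempty := by
    by_contra h
    rw [Finset.not_nonempty_iff_eq_empty, Finset.filter_eq_empty_iff] at h
    have : ∑ i, z' i = 0 := Finset.sum_eq_zero (fun i hi => by simpa using h hi)
    omega
  obtain ⟨l, hl0, hlast⟩ : ∃ l, z' l ≠ 0 ∧ ∀ j, l < j → z' j = 0 := by
    refine ⟨Finset.max' _ hne, by simpa using Finset.max'_mem _ hne, fun j hj => ?_⟩
    by_contra h
    have := Finset.le_max' (Finset.univ.filter (fun i => z' i ≠ 0)) j (by simpa using h)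
    exact absurd hj (not_lt.2 this)
  set u' := Function.update z' l (z' l - 1) with hu'
  have hu'l : u' l = z' l - 1 := by simp [hu']
  have hu'n : ∀ j, j ≠ l → u' j = z' j := fun j hj => by simp [hu', hj]
  have hle : u' ≤ z' := by
    intro j
    by_cases h : j = l
    · rw [h, hu'l]; exact Nat.sub_le _ _
    · rw [hu'n j h]
  have hsum : ∑ i, u' i = d := by
    have h1 : ∑ i, z' i = z' l + ∑ i ∈ Finset.univ.erase l, z' i := by
      rw [Finset.add_sum_erase _ _ (Finset.mem_univ l)]
    have h2 : ∑ i, u' i = u' l + ∑ i ∈ Finset.univ.erase l, u' i := by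
      rw [Finset.add_sum_erase _ _ (Finset.mem_univ l)]
    have h3 : ∑ i ∈ Finset.univ.erase l, u' i = ∑ i ∈ Finset.univ.erase l, z' i :=
      Finset.sum_congr rfl (fun i hi => hu'n i (Finset.ne_of_mem_erase hi))
    omega
  have hu'mem : u' ∈ mbox b d := mem_mbox.2 ⟨hle.trans hz'.1, hsum⟩
  have hnlt : ¬ lk u' < lk u := by
    rintro ⟨m, hm1, hm2⟩
    obtain ⟨k, hk1, hk2⟩ := hlt
    change ∀ j, j < m → u' j = u j at hm1
    change ∀ j, j < k → z j = z' j at hk1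
    change u' m < u m at hm2
    change z k < z' k at hk2
    rcases lt_or_ge m k with h | h
    · have e1 := hk1 m h
      have e2 : u m ≤ z m := huz m
      have : m = l := by
        by_contra hml
        have := hu'n m hml
        omega
      have := hlast k (this ▸ h)
      omega
    · have e3 : u' k ≤ u k := by
        rcases h.lt_or_eq with h | h
        · exact (hm1 k h).le
        · subst h; exact hm2.le
      have e2 : u k ≤ z k := huz k
      have hkl : k = l := by
        by_contra hml
        have := hu'n k hml
        omega
      have hmk : m ≠ k := by
        rintro rfl
        rw [← hkl] at hu'l
        omega
      have hkm : k < m := lt_of_le_of_ne h (Ne.symm hmk)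
      have : ∑ i, u' i < ∑ i, u i := by
        refine Finset.sum_lt_sum (fun i _ => ?_) ⟨m, Finset.mem_univ _, hm2⟩
        rcases lt_or_ge i m with hi | hi
        · exact (hm1 i hi).le
        · rw [hu'n i (by rintro rfl; exact absurd hi (not_le.2 (hkl ▸ hkm))),
            hlast i (hkl ▸ hkm.trans_le hi)]
          exact Nat.zero_le _
      omega
  refine ⟨u', ?_, hle⟩
  rcases lt_trichotomy (lk u) (lk u') with h | h | h
  · exact hL.2 u hu u' hu'mem h
  · exact lk_inj h ▸ hu
  · exact absurd h hnlt

/-- The Clements-Lindström property of the box `b`. -/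
def CLfor {n : ℕ} (b : Fin n → ℕ) : Prop :=
  ∀ (d : ℕ) (A L : Finset (Fin n → ℕ)), A ⊆ mbox b d → UpSeg lk (mbox b d) L →
    L.card ≤ A.card → (shad b d L).card ≤ (shad b d A).card

lemma shad_mono {n : ℕ} {b : Fin n → ℕ} {d : ℕ} {A B : Finset (Fin n → ℕ)} (h : A ⊆ B) :
    shad b d A ⊆ shad b d B := by
  intro z hz
  obtain ⟨h1, u, hu, h2⟩ := mem_shad.1 hz
  exact mem_shad.2 ⟨h1, u, h hu, h2⟩

lemma CL_of_le_one {n : ℕ} (hn : n ≤ 1) (b : Fin n → ℕ) : CLfor b := by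
  intro d A L hA hL hc
  apply Finset.card_le_card
  apply shad_mono
  intro u hu
  have hs : ∀ x ∈ mbox b d, ∀ y ∈ mbox b d, x = y := by
    intro x hx y hy
    rw [mem_mbox] at hx hy
    have : Subsingleton (Fin n) := by
      interval_cases n <;> infer_instance
    funext i
    rw [← Fintype.sum_subsingleton x i, ← Fintype.sum_subsingleton y i, hx.2, hy.2]
  have : 0 < A.card := (Finset.card_pos.2 ⟨u, hu⟩).trans_le hc
  obtain ⟨v, hv⟩ := Finset.card_pos.1 this
  rw [hs u (hL.1 hu) v (hA hv)]
  exact hv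

lemma CL_two (b : Fin 2 → ℕ) (hb : b 0 ≤ b 1) : CLfor b := by
  classical
  intro d A L hA hL hc
  have mem2 : ∀ (e : ℕ) (u : Fin 2 → ℕ), u ∈ mbox b e ↔ (u 0 ≤ b 0 ∧ u 1 ≤ b 1) ∧ u 0 + u 1 = e := by
    intro e u
    rw [mem_mbox, Pi.le_def, Fin.forall_fin_two, Fin.sum_univ_two]
  have ext2 : ∀ (u v : Fin 2 → ℕ), u 0 = v 0 → u 1 = v 1 → u = v := by
    intro u v h0 h1
    funext i
    fin_cases i
    · exact h0
    · exact h1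
  have le2 : ∀ (u v : Fin 2 → ℕ), u ≤ v ↔ u 0 ≤ v 0 ∧ u 1 ≤ v 1 := by
    intro u v
    rw [Pi.le_def, Fin.forall_fin_two]
  have lt2 : ∀ (u v : Fin 2 → ℕ), u 0 < v 0 → lk u < lk v := by
    intro u v h
    exact lk_lt_iff.2 ⟨0, fun j hj => absurd hj (Fin.not_lt_zero j), h⟩
  by_cases hfull : A = mbox b d
  · exact Finset.card_le_card (shad_mono (hfull ▸ hL.1))
  obtain ⟨x, hx, hxA⟩ : ∃ x ∈ mbox b d, x ∉ A := by
    by_contra h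
    push Not at h
    exact hfull (Finset.Subset.antisymm hA h)
  have hx' := (mem2 _ _).1 hx
  have hA' : ∀ u ∈ A, (u 0 ≤ b 0 ∧ u 1 ≤ b 1) ∧ u 0 + u 1 = d := fun u hu => (mem2 _ _).1 (hA hu)
  have hL' : ∀ u ∈ L, (u 0 ≤ b 0 ∧ u 1 ≤ b 1) ∧ u 0 + u 1 = d :=
    fun u hu => (mem2 _ _).1 (hL.1 hu)
  rcases Nat.lt_or_ge d (b 0) with hd | hd
  · rcases L.eq_empty_or_nonempty with hLe | hLne
    · have : shad b d L = ∅ := by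
        ext z; simp [mem_shad, hLe]
      simp [this]
    have hAne : A.Nonempty := Finset.card_pos.1 ((Finset.card_pos.2 hLne).trans_le hc)
    have h1 : (shad b d L).card ≤ L.card + 1 := by
      have : shad b d L ⊆ insert ![d+1, 0] (L.image (fun u => ![u 0, u 1 + 1])) := by
        intro z hz
        obtain ⟨hz1, u, hu, huz⟩ := mem_shad.1 hz
        rw [mem2] at hz1
        rw [le2] at huz
        have hu' := hL' u hu
        rw [Finset.mem_insert, Finset.mem_image]
        by_cases h0 : z 1 = 0
        · left
          apply ext2
          · simp; omega
          · simp; omega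
        · right
          refine ⟨![z 0, z 1 - 1], ?_, ?_⟩
          · have hmem : ![z 0, z 1 - 1] ∈ mbox b d := by
              rw [mem2]; simp; omega
            by_cases he : z 0 = u 0
            · have : ![z 0, z 1 - 1] = u := by
                apply ext2
                · simp; omega
                · simp; omega
              rw [this]; exact hu
            · refine hL.2 u hu _ hmem (lt2 _ _ ?_)
              simp; omega
          · apply ext2
            · simp
            · simp; omega
      refine (Finset.card_le_card this).trans ((Finset.card_insert_le _ _).trans ?_)
      exact Nat.add_le_add_right Finset.card_image_le 1
    have h2 : A.card + 1 ≤ (shad b d A).card := by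
      obtain ⟨v, hv, hmin⟩ := Finset.exists_min_image A (fun u => u 0) hAne
      have hv' := hA' v hv
      have : insert ![v 0, v 1 + 1] (A.image (fun u => ![u 0 + 1, u 1])) ⊆ shad b d A := by
        intro z hz
        rw [Finset.mem_insert, Finset.mem_image] at hz
        rcases hz with rfl | ⟨u, hu, rfl⟩
        · rw [mem_shad, mem2]
          refine ⟨by simp; omega, v, hv, ?_⟩
          rw [le2]; simp
        · have hu' := hA' u hu
          rw [mem_shad, mem2]
          refine ⟨by simp; omega, u, hu, ?_⟩
          rw [le2]; simp
      refine le_trans ?_ (Finset.card_le_card this)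
      rw [Finset.card_insert_of_notMem, Finset.card_image_of_injOn]
      · intro u hu w hw h
        have e0 := congrFun h 0
        have e1 := congrFun h 1
        simp at e0 e1
        exact ext2 _ _ e0 e1
      · rw [Finset.mem_image]
        rintro ⟨u, hu, h⟩
        have e0 := congrFun h 0
        simp at e0
        have := hmin u hu
        omega
    omega
  · have h1 : (shad b d L).card ≤ L.card := by
      have : shad b d L ⊆ L.image (fun u => ![u 0, u 1 + 1]) := by
        intro z hz
        obtain ⟨hz1, u, hu, huz⟩ := mem_shad.1 hz
        rw [mem2] at hz1
        rw [le2] at huz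
        have hu' := hL' u hu
        rw [Finset.mem_image]
        refine ⟨![z 0, z 1 - 1], ?_, ?_⟩
        · have hmem : ![z 0, z 1 - 1] ∈ mbox b d := by
            rw [mem2]; simp; omega
          by_cases he : z 0 = u 0
          · have : ![z 0, z 1 - 1] = u := by
              apply ext2
              · simp; omega
              · simp; omega
            rw [this]; exact hu
          · refine hL.2 u hu _ hmem (lt2 _ _ ?_)
            simp; omega
        · apply ext2
          · simp
          · simp; omega
      exact (Finset.card_le_card this).trans Finset.card_image_le
    have h2 : A.card ≤ (shad b d A).card := by
      have hxne : ∀ u ∈ A, u 0 ≠ x 0 := by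
        intro u hu h
        have := hA' u hu
        exact hxA (ext2 u x h (by omega) ▸ hu)
      refine Finset.card_le_card_of_injOn
        (fun u => if u 0 < x 0 then ![u 0 + 1, u 1] else ![u 0, u 1 + 1]) ?_ ?_
      · intro u hu
        have hu' := hA' u hu
        have := hxne u hu
        simp only [Finset.mem_coe]
        split_ifs with h
        · rw [mem_shad, mem2]
          refine ⟨by simp; omega, u, hu, ?_⟩
          rw [le2]; simp
        · rw [mem_shad, mem2]
          refine ⟨by simp; omega, u, hu, ?_⟩
          rw [le2]; simp
      · intro u hu w hw h
        have hu' := hA' u hu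
        have hw' := hA' w hw
        have := hxne u hu
        have := hxne w hw
        simp only at h
        have e0 := congrFun h 0
        have : u 0 = w 0 := by
          split_ifs at e0 <;> simp at e0 <;> omega
        exact ext2 _ _ this (by omega)
    omega

end CL

section Compress

/-- fiberwise compression -/
noncomputable def fcomp {α β : Type*} [LinearOrder β] (k : α → β) (φ : α → ℕ)
    (X A : Finset α) : Finset α :=
  open Classical in X.filter (fun u => u ∈ topSeg k (X.filter (fun w => φ w = φ u))
    (A.filter (fun w => φ w = φ u)).card)

lemma fcomp_fiber {α β : Type*} [LinearOrder β] (k : α → β) (φ : α → ℕ)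
    (X A : Finset α) (j : ℕ) :
    (fcomp k φ X A).filter (fun w => φ w = j) =
      topSeg k (X.filter (fun w => φ w = j)) (A.filter (fun w => φ w = j)).card := by
  classical
  ext u
  simp only [fcomp, Finset.mem_filter]
  constructor
  · rintro ⟨⟨h1, h2⟩, rfl⟩
    exact h2
  · intro h
    have h' := (topSeg_upSeg k _ _).1 h
    rw [Finset.mem_filter] at h'
    obtain ⟨h1, rfl⟩ := h'
    exact ⟨⟨h1, h⟩, rfl⟩

lemma fcomp_fiber_card {α β : Type*} [LinearOrder β] {k : α → β} (hk : Function.Injective k)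
    (φ : α → ℕ) {X A : Finset α} (hA : A ⊆ X) (j : ℕ) :
    ((fcomp k φ X A).filter (fun w => φ w = j)).card = (A.filter (fun w => φ w = j)).card := by
  rw [fcomp_fiber, card_topSeg hk]
  exact Finset.card_le_card (Finset.filter_subset_filter _ hA)

lemma fcomp_subset {α β : Type*} [LinearOrder β] (k : α → β) (φ : α → ℕ)
    (X A : Finset α) : fcomp k φ X A ⊆ X := by
  classical
  exact Finset.filter_subset _ _

lemma fcomp_card {α β : Type*} [LinearOrder β] {k : α → β} (hk : Function.Injective k)
    (φ : α → ℕ) {X A : Finset α} (hA : A ⊆ X) : (fcomp k φ X A).card = A.card := by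
  classical
  rw [Finset.card_eq_sum_card_fiberwise (f := φ) (s := A) (t := X.image φ),
    Finset.card_eq_sum_card_fiberwise (f := φ) (s := fcomp k φ X A) (t := X.image φ)]
  · exact Finset.sum_congr rfl (fun j _ => fcomp_fiber_card hk φ hA j)
  · intro x hx
    exact Finset.mem_coe.2 (Finset.mem_image_of_mem _ (fcomp_subset k φ X A hx))
  · intro x hx
    exact Finset.mem_coe.2 (Finset.mem_image_of_mem _ (hA hx))

lemma fcomp_weight {α β : Type*} [LinearOrder β] {k : α → β} (hk : Function.Injective k)
    (φ : α → ℕ) {X A : Finset α} (hA : A ⊆ X) (f : α → ℕ)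
    (hf : ∀ x ∈ X, ∀ y ∈ X, k x < k y → f x < f y)
    (hle : ∑ x ∈ fcomp k φ X A, f x ≤ ∑ x ∈ A, f x) : fcomp k φ X A = A := by
  classical
  by_contra hne
  have key : ∀ j, ∑ x ∈ A.filter (fun w => φ w = j), f x ≤
      ∑ x ∈ (fcomp k φ X A).filter (fun w => φ w = j), f x ∧
      (A.filter (fun w => φ w = j) ≠ (fcomp k φ X A).filter (fun w => φ w = j) →
      ∑ x ∈ A.filter (fun w => φ w = j), f x <
      ∑ x ∈ (fcomp k φ X A).filter (fun w => φ w = j), f x) := by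
    intro j
    refine UpSeg.sum_le hk (X := X.filter (fun w => φ w = j)) ?_ ?_ ?_ f ?_
    · rw [fcomp_fiber]; exact topSeg_upSeg _ _ _
    · exact Finset.filter_subset_filter _ hA
    · rw [fcomp_fiber_card hk φ hA]
    · intro x hx y hy
      exact hf x (Finset.mem_filter.1 hx).1 y (Finset.mem_filter.1 hy).1
  have e1 := Finset.sum_fiberwise_of_maps_to (s := A) (t := X.image φ) (g := φ)
    (fun x hx => Finset.mem_image_of_mem _ (hA hx)) f
  have e2 := Finset.sum_fiberwise_of_maps_to (s := fcomp k φ X A) (t := X.image φ) (g := φ)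
    (fun x hx => Finset.mem_image_of_mem _ (fcomp_subset k φ X A hx)) f
  rw [← e1, ← e2] at hle
  refine absurd hle (not_le.2 (Finset.sum_lt_sum (fun j _ => (key j).1) ?_))
  by_contra hcon
  push Not at hcon
  apply hne
  ext u
  have huX : ∀ u ∈ X, (u ∈ fcomp k φ X A ↔ u ∈ A) := by
    intro u hu
    have h1 : A.filter (fun w => φ w = φ u) = (fcomp k φ X A).filter (fun w => φ w = φ u) := by
      by_contra h
      exact absurd ((key _).2 h) (not_lt.2 (hcon (φ u) (Finset.mem_image_of_mem _ hu)))
    have h2 : u ∈ A.filter (fun w => φ w = φ u) ↔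
      u ∈ (fcomp k φ X A).filter (fun w => φ w = φ u) := by rw [h1]
    simpa using h2.symm
  exact ⟨fun h => (huX u (fcomp_subset k φ X A h)).1 h, fun h => (huX u (hA h)).2 h⟩

variable {n : ℕ}

lemma mem_mbox_removeNth (p : Fin (n + 1)) {b : Fin (n + 1) → ℕ} {d : ℕ} {u : Fin (n + 1) → ℕ} :
    u ∈ mbox b d ↔ u p ≤ b p ∧ u p ≤ d ∧
      p.removeNth u ∈ mbox (p.removeNth b) (d - u p) := by
  rw [mem_mbox, mem_mbox, Fin.sum_univ_succAbove _ p]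
  have : u ≤ b ↔ u p ≤ b p ∧ p.removeNth u ≤ p.removeNth b := by
    rw [Pi.le_def, Fin.forall_iff_succAbove p]
    rfl
  rw [this]
  have e : ∑ i, p.removeNth u i = ∑ i, u (p.succAbove i) := rfl
  rw [e]
  constructor
  · rintro ⟨⟨h1, h2⟩, h3⟩
    exact ⟨h1, by omega, h2, by omega⟩
  · rintro ⟨h1, h2, h3, h4⟩
    exact ⟨⟨h1, h3⟩, by omega⟩

lemma lk_removeNth (p : Fin (n + 1)) {u v : Fin (n + 1) → ℕ} (h : u p = v p) :
    lk (p.removeNth u) < lk (p.removeNth v) ↔ lk u < lk v := by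
  rw [lk_lt_iff, lk_lt_iff]
  constructor
  · rintro ⟨i, h1, h2⟩
    refine ⟨p.succAbove i, ?_, h2⟩
    intro j hj
    by_cases hjp : j = p
    · rw [hjp, h]
    · obtain ⟨j', rfl⟩ := Fin.exists_succAbove_eq hjp
      exact h1 j' (Fin.succAbove_lt_succAbove_iff.1 hj)
  · rintro ⟨i, h1, h2⟩
    have hip : i ≠ p := by rintro rfl; omega
    obtain ⟨i', rfl⟩ := Fin.exists_succAbove_eq hip
    exact ⟨i', fun j hj => h1 _ (Fin.succAbove_lt_succAbove_iff.2 hj), h2⟩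

lemma removeNth_ext (p : Fin (n + 1)) {u v : Fin (n + 1) → ℕ} (h : u p = v p)
    (h2 : p.removeNth u = p.removeNth v) : u = v := by
  rw [← Fin.insertNth_self_removeNth p u, ← Fin.insertNth_self_removeNth p v, h, h2]

lemma removeNth_le (p : Fin (n + 1)) {u v : Fin (n + 1) → ℕ} :
    u ≤ v ↔ u p ≤ v p ∧ p.removeNth u ≤ p.removeNth v := by
  rw [Pi.le_def, Fin.forall_iff_succAbove p]
  rfl

lemma eq_of_le_sum {m : ℕ} {u v : Fin m → ℕ} (h : u ≤ v) (hs : ∑ i, v i ≤ ∑ i, u i) : u = v := by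
  by_contra hne
  obtain ⟨i, hi⟩ : ∃ i, u i ≠ v i := by
    by_contra hc; push Not at hc; exact hne (funext hc)
  have := Finset.sum_lt_sum (s := Finset.univ) (fun i _ => h i)
    ⟨i, Finset.mem_univ _, lt_of_le_of_ne (h i) hi⟩
  omega

lemma shad_fcomp (p : Fin (n + 1)) (b : Fin (n + 1) → ℕ) (hCL : CLfor (p.removeNth b)) (d : ℕ)
    {A : Finset (Fin (n + 1) → ℕ)} (hA : A ⊆ mbox b d) :
    (shad b d (fcomp lk (fun u => u p) (mbox b d) A)).card ≤ (shad b d A).card := by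
  classical
  set X := mbox b d with hX
  set C := fcomp lk (fun u : Fin (n + 1) → ℕ => u p) X A with hC
  have hCX : C ⊆ X := fcomp_subset _ _ _ _
  have hmaps : ∀ B : Finset (Fin (n + 1) → ℕ), ∀ z ∈ shad b d B, z p ∈ Finset.range (b p + 1) := by
    intro B z hz
    have : z p ≤ b p := (mem_mbox.1 (mem_shad.1 hz).1).1 p
    rw [Finset.mem_range]; omega
  rw [Finset.card_eq_sum_card_fiberwise (f := fun z : Fin (n + 1) → ℕ => z p) (hmaps C),
    Finset.card_eq_sum_card_fiberwise (f := fun z : Fin (n + 1) → ℕ => z p) (hmaps A)]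
  refine Finset.sum_le_sum (fun j hj => ?_)
  have hjb : j ≤ b p := by rw [Finset.mem_range] at hj; omega
  set Y := (mbox b (d + 1)).filter (fun z => z p = j) with hY
  let P : Finset (Fin (n + 1) → ℕ) → Finset (Fin (n + 1) → ℕ) := fun B =>
    Y.filter (fun z => ∃ u ∈ B, u p = j ∧ u ≤ z)
  let Q : Finset (Fin (n + 1) → ℕ) → Finset (Fin (n + 1) → ℕ) := fun B =>
    Y.filter (fun z => ∃ u ∈ B, u p + 1 = j ∧ u ≤ z)
  have mP : ∀ B z, z ∈ P B ↔ z ∈ Y ∧ ∃ u ∈ B, u p = j ∧ u ≤ z := fun B z => by simp [P]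
  have mQ : ∀ B z, z ∈ Q B ↔ z ∈ Y ∧ ∃ u ∈ B, u p + 1 = j ∧ u ≤ z := fun B z => by simp [Q]
  have mY : ∀ z, z ∈ Y ↔ z ∈ mbox b (d + 1) ∧ z p = j := fun z => by simp [hY]
  have hQeq : ∀ u z : Fin (n + 1) → ℕ, u ∈ X → z ∈ Y → u p + 1 = j → u ≤ z →
      p.removeNth u = p.removeNth z := by
    intro u z hu hz h1 h2
    have hz' := (mY z).1 hz
    refine eq_of_le_sum ((removeNth_le p).1 h2).2 ?_
    have e1 := (mem_mbox.1 ((mem_mbox_removeNth p).1 hu).2.2).2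
    have e2 := (mem_mbox.1 ((mem_mbox_removeNth p).1 hz'.1).2.2).2
    have := hz'.2
    rw [e1, e2]; omega
  have hsplit : ∀ B ⊆ X, (shad b d B).filter (fun z => z p = j) = P B ∪ Q B := by
    intro B hB
    ext z
    rw [Finset.mem_filter, mem_shad, Finset.mem_union, mP, mQ, mY]
    constructor
    · rintro ⟨⟨h1, u, hu, huz⟩, h2⟩
      have hup : u p ≤ z p := huz p
      have hup2 : z p ≤ u p + 1 := by
        have e1 := (mem_mbox.1 (hB hu)).2
        have e2 := (mem_mbox.1 h1).2
        rw [Fin.sum_univ_succAbove _ p] at e1 e2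
        have : ∑ i, u (p.succAbove i) ≤ ∑ i, z (p.succAbove i) :=
          Finset.sum_le_sum (fun i _ => huz _)
        omega
      rcases Nat.lt_or_ge (u p) (z p) with h | h
      · exact Or.inr ⟨⟨h1, h2⟩, u, hu, by omega, huz⟩
      · exact Or.inl ⟨⟨h1, h2⟩, u, hu, by omega, huz⟩
    · rintro (⟨⟨h1, h2⟩, u, hu, h3, h4⟩ | ⟨⟨h1, h2⟩, u, hu, h3, h4⟩)
      · exact ⟨⟨h1, u, hu, h4⟩, h2⟩
      · exact ⟨⟨h1, u, hu, h4⟩, h2⟩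
  -- Q cardinality
  have hQcard : ∀ B ⊆ X, (Q B).card = (B.filter (fun u => u p + 1 = j)).card := by
    intro B hB
    symm
    refine Finset.card_bij (fun u _ => p.insertNth j (p.removeNth u)) ?_ ?_ ?_
    · intro u hu
      rw [Finset.mem_filter] at hu
      have hu1 := (mem_mbox_removeNth p).1 (hB hu.1)
      rw [mQ, mY, mem_mbox_removeNth p]
      simp only [Fin.insertNth_apply_same, Fin.removeNth_insertNth]
      refine ⟨⟨⟨hjb, by omega, ?_⟩, trivial⟩, u, hu.1, hu.2, ?_⟩
      · have : d + 1 - j = d - u p := by omega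
        rw [this]; exact hu1.2.2
      · rw [removeNth_le p]
        simp only [Fin.insertNth_apply_same, Fin.removeNth_insertNth]
        exact ⟨by omega, le_rfl⟩
    · intro u hu v hv h
      rw [Finset.mem_filter] at hu hv
      refine removeNth_ext p (by omega) ?_
      exact (Fin.insertNth_inj.1 h).2
    · intro z hz
      obtain ⟨hz, u, hu, h1, h2⟩ := (mQ _ _).1 hz
      refine ⟨u, Finset.mem_filter.2 ⟨hu, h1⟩, ?_⟩
      rw [hQeq u z (hB hu) hz h1 h2, ← ((mY z).1 hz).2, Fin.insertNth_self_removeNth]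
  -- P cardinality
  let sl : Finset (Fin (n + 1) → ℕ) → Finset (Fin n → ℕ) := fun B =>
    (B.filter (fun u => u p = j)).image (fun u => p.removeNth u)
  have mS : ∀ B t, t ∈ sl B ↔ ∃ u ∈ B, u p = j ∧ p.removeNth u = t := fun B t => by
    simp [sl, and_assoc]
  have hScard : ∀ B, (sl B).card = (B.filter (fun u => u p = j)).card := by
    intro B
    refine Finset.card_image_of_injOn ?_
    intro u hu v hv h
    simp only [Finset.coe_filter, Set.mem_ofPred_eq] at hu hv
    exact removeNth_ext p (by omega) h
  have hSsub : ∀ B ⊆ X, sl B ⊆ mbox (p.removeNth b) (d - j) := by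
    intro B hB t ht
    obtain ⟨u, hu, h1, rfl⟩ := (mS _ _).1 ht
    have := ((mem_mbox_removeNth p).1 (hB hu)).2.2
    rwa [h1] at this
  have hPmem : ∀ B ⊆ X, ∀ z, z ∈ P B ↔ z p = j ∧
      p.removeNth z ∈ shad (p.removeNth b) (d - j) (sl B) := by
    intro B hB z
    rw [mP, mY, mem_mbox_removeNth p, mem_shad]
    constructor
    · rintro ⟨⟨⟨h1, h2, h3⟩, h4⟩, u, hu, h5, h6⟩
      have hud := ((mem_mbox_removeNth p).1 (hB hu)).2.1
      refine ⟨h4, ?_, p.removeNth u, (mS _ _).2 ⟨u, hu, h5, rfl⟩, ((removeNth_le p).1 h6).2⟩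
      have : d - j + 1 = d + 1 - z p := by omega
      rw [this]; exact h3
    · rintro ⟨h1, h2, t, ht, h3⟩
      obtain ⟨u, hu, h4, rfl⟩ := (mS _ _).1 ht
      have hud := ((mem_mbox_removeNth p).1 (hB hu)).2.1
      refine ⟨⟨⟨by omega, by omega, ?_⟩, h1⟩, u, hu, h4, (removeNth_le p).2 ⟨by omega, h3⟩⟩
      have : d - j + 1 = d + 1 - z p := by omega
      rw [← this]; exact h2
  have hPcard : ∀ B ⊆ X, (P B).card = (shad (p.removeNth b) (d - j) (sl B)).card := by
    intro B hB
    refine Finset.card_bij (fun z _ => p.removeNth z) ?_ ?_ ?_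
    · intro z hz
      exact ((hPmem B hB z).1 hz).2
    · intro z hz w hw h
      have e1 := ((hPmem B hB z).1 hz).1
      have e2 := ((hPmem B hB w).1 hw).1
      exact removeNth_ext p (by omega) h
    · intro t ht
      refine ⟨p.insertNth j t, (hPmem B hB _).2 ?_, ?_⟩
      · simp only [Fin.insertNth_apply_same, Fin.removeNth_insertNth]
        exact ⟨trivial, ht⟩
      · simp only [Fin.removeNth_insertNth]
  -- fibers of C are segments
  have hCfib : ∀ j', ∀ u ∈ C, ∀ v ∈ X, u p = j' → v p = j' → lk u < lk v → v ∈ C := by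
    intro j' u hu v hv h1 h2 h3
    have hseg := topSeg_upSeg lk (X.filter (fun w => w p = j')) (A.filter (fun w => w p = j')).card
    rw [← fcomp_fiber lk (fun u : Fin (n + 1) → ℕ => u p) X A j'] at hseg
    exact (Finset.mem_filter.1 (hseg.2 u (Finset.mem_filter.2 ⟨hu, h1⟩) v
      (Finset.mem_filter.2 ⟨hv, h2⟩) h3)).1
  have hslC : UpSeg lk (mbox (p.removeNth b) (d - j)) (sl C) := by
    refine ⟨hSsub C hCX, ?_⟩
    intro t ht t' ht' hlt
    obtain ⟨u, hu, h1, rfl⟩ := (mS _ _).1 ht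
    have hud := ((mem_mbox_removeNth p).1 (hCX hu)).2.1
    refine (mS _ _).2 ⟨p.insertNth j t', ?_, by simp, by simp⟩
    refine hCfib j u hu _ ?_ h1 (by simp) ?_
    · rw [hX, mem_mbox_removeNth p]
      simp only [Fin.insertNth_apply_same, Fin.removeNth_insertNth]
      exact ⟨hjb, by omega, ht'⟩
    · refine (lk_removeNth p (by simp [h1])).1 ?_
      rw [Fin.removeNth_insertNth]
      exact hlt
  have hP : UpSeg lk Y (P C) := by
    refine ⟨fun z hz => ((mP _ _).1 hz).1, ?_⟩
    intro z hz z' hz' hlt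
    have hz1 := (hPmem C hCX z).1 hz
    rw [mY] at hz'
    obtain ⟨hzY, u, hu, hu1, hu2⟩ := (mP _ _).1 hz
    have hud := ((mem_mbox_removeNth p).1 (hCX hu)).2.1
    refine (hPmem C hCX z').2 ⟨hz'.2, (shad_upSeg hslC).2 _ hz1.2 _ ?_ ?_⟩
    · have := ((mem_mbox_removeNth p).1 hz'.1).2.2
      have e : d - j + 1 = d + 1 - z' p := by omega
      rw [e]; exact this
    · exact (lk_removeNth p (by omega)).2 hlt
  have hQ : UpSeg lk Y (Q C) := by
    refine ⟨fun z hz => ((mQ _ _).1 hz).1, ?_⟩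
    intro z hz z' hz' hlt
    obtain ⟨hzY, u, hu, hu1, hu2⟩ := (mQ _ _).1 hz
    have hu3 := hQeq u z (hCX hu) hzY hu1 hu2
    have hz1 := (mY z').1 hz'
    have hz2 := (mY z).1 hzY
    have hub := (mem_mbox_removeNth p).1 (hCX hu)
    refine (mQ _ _).2 ⟨hz', p.insertNth (u p) (p.removeNth z'), ?_, by simp [hu1], ?_⟩
    · refine hCfib (u p) u hu _ ?_ rfl (by simp) ?_
      · rw [hX, mem_mbox_removeNth p]
        simp only [Fin.insertNth_apply_same, Fin.removeNth_insertNth]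
        refine ⟨hub.1, hub.2.1, ?_⟩
        have := ((mem_mbox_removeNth p).1 hz1.1).2.2
        have e : d - u p = d + 1 - z' p := by omega
        rw [e]; exact this
      · refine (lk_removeNth p (by simp)).1 ?_
        rw [Fin.removeNth_insertNth, hu3]
        exact (lk_removeNth p (by omega)).2 hlt
    · rw [removeNth_le p]
      simp only [Fin.insertNth_apply_same, Fin.removeNth_insertNth]
      exact ⟨by omega, le_rfl⟩
  rw [hsplit C hCX, hsplit A hA]
  refine UpSeg.card_union_le lk_inj hP hQ ?_ ?_
  · refine le_trans ?_ (Finset.card_le_card Finset.subset_union_left)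
    rw [hPcard C hCX, hPcard A hA]
    refine hCL (d - j) (sl A) (sl C) (hSsub A hA) hslC ?_
    rw [hScard, hScard]
    exact (fcomp_fiber_card lk_inj (fun u : Fin (n + 1) → ℕ => u p) hA j).le
  · refine le_trans ?_ (Finset.card_le_card Finset.subset_union_right)
    rw [hQcard C hCX, hQcard A hA]
    rcases Nat.eq_zero_or_pos j with h0 | h0
    · subst h0; simp
    · have e : ∀ B : Finset (Fin (n + 1) → ℕ), B.filter (fun u => u p + 1 = j) =
          B.filter (fun u => u p = j - 1) := by
        intro B
        apply Finset.filter_congr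
        intro u _
        omega
      rw [e, e]
      exact (fcomp_fiber_card lk_inj (fun u : Fin (n + 1) → ℕ => u p) hA (j - 1)).le

end Compress

section CLmain

lemma exists_between_sum {ι : Type*} (S : Finset ι) (v b : ι → ℕ) (hvb : ∀ i ∈ S, v i ≤ b i)
    (s : ℕ) (h1 : ∑ i ∈ S, v i ≤ s) (h2 : s ≤ ∑ i ∈ S, b i) :
    ∃ m : ι → ℕ, (∀ i ∈ S, v i ≤ m i ∧ m i ≤ b i) ∧ ∑ i ∈ S, m i = s := by
  classical
  induction S using Finset.induction_on generalizing s with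
  | empty => exact ⟨fun _ => 0, by simp, by simpa using h2.antisymm h1 |>.symm⟩
  | insert a S ha ih =>
    rw [Finset.sum_insert ha] at h1 h2
    have hS : ∑ i ∈ S, v i ≤ ∑ i ∈ S, b i :=
      Finset.sum_le_sum (fun i hi => hvb i (Finset.mem_insert_of_mem hi))
    have ha' := hvb a (Finset.mem_insert_self a S)
    obtain ⟨m, hm1, hm2⟩ := ih (fun i hi => hvb i (Finset.mem_insert_of_mem hi))
      (s - min (b a) (s - ∑ i ∈ S, v i)) (by omega) (by omega)
    refine ⟨fun i => if i = a then min (b a) (s - ∑ i ∈ S, v i) else m i, ?_, ?_⟩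
    · intro i hi
      rcases Finset.mem_insert.1 hi with rfl | hi'
      · simp only [if_true]; omega
      · have : i ≠ a := by rintro rfl; exact ha hi'
        simp only [if_neg this]; exact hm1 i hi'
    · rw [Finset.sum_insert ha]
      have : ∑ i ∈ S, (if i = a then min (b a) (s - ∑ i ∈ S, v i) else m i) = ∑ i ∈ S, m i := by
        refine Finset.sum_congr rfl (fun i hi => ?_)
        have : i ≠ a := by rintro rfl; exact ha hi
        simp [this]
      rw [this, hm2]
      simp only [if_true]; omega

lemma lk_le_of_raise {n : ℕ} {v y : Fin (n + 1) → ℕ} (h : ∀ i, i ≠ Fin.last n → v i ≤ y i)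
    (hs : ∑ i, v i = ∑ i, y i) : lk v ≤ lk y := by
  by_contra hc
  obtain ⟨i, h1, h2⟩ := lk_lt_iff.1 (not_le.1 hc)
  have hi : i = Fin.last n := by
    by_contra hi
    have := h i hi
    omega
  have : ∑ i, y i < ∑ i, v i := by
    refine Finset.sum_lt_sum (fun j _ => ?_) ⟨i, Finset.mem_univ _, h2⟩
    by_cases hj : j = i
    · rw [hj]; exact h2.le
    · exact (h1 j (lt_of_le_of_ne (hi ▸ Fin.le_last j) hj)).le
  omega

lemma exchange_last {m : ℕ} (b : Fin (m + 3) → ℕ) (hb : b 0 ≤ b 1) (d : ℕ)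
    (A : Finset (Fin (m + 3) → ℕ))
    (h0 : ∀ u ∈ A, ∀ w ∈ mbox b d, w 0 = u 0 → lk u ≤ lk w → w ∈ A)
    (hl : ∀ u ∈ A, ∀ w ∈ mbox b d, w (Fin.last _) = u (Fin.last _) → lk u ≤ lk w → w ∈ A)
    (x v : Fin (m + 3) → ℕ) (hx : x ∈ mbox b d) (hv : v ∈ mbox b d) (hxA : x ∉ A) (hvA : v ∈ A)
    (hlt : lk v < lk x) : v (Fin.last _) < x (Fin.last _) := by
  classical
  by_contra hcon
  rw [not_lt] at hcon
  have hx0 : v 0 < x 0 := by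
    obtain ⟨i, h1, h2⟩ := lk_lt_iff.1 hlt
    rcases Nat.lt_trichotomy (v 0) (x 0) with h | h | h
    · exact h
    · exact absurd (h0 v hvA x hx h.symm hlt.le) hxA
    · exfalso
      by_cases hi : i = 0
      · subst hi; omega
      · have := h1 0 (Fin.pos_iff_ne_zero.2 hi)
        omega
  have hl0 : (Fin.last (m + 2)) ≠ 0 := by
    intro h; have := congrArg Fin.val h; simp at this
  obtain ⟨S, hS⟩ : ∃ S : Finset (Fin (m + 3)), S = (Finset.univ.erase 0).erase (Fin.last _) :=
    ⟨_, rfl⟩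
  have hsum : ∀ f : Fin (m + 3) → ℕ, ∑ i, f i = f 0 + ∑ i ∈ S, f i + f (Fin.last _) := by
    intro f
    rw [hS, ← Finset.add_sum_erase Finset.univ f (Finset.mem_univ 0),
      ← Finset.add_sum_erase (Finset.univ.erase 0) f
        (Finset.mem_erase.2 ⟨hl0, Finset.mem_univ (Fin.last _)⟩)]
    omega
  have hx' := mem_mbox.1 hx
  have hv' := mem_mbox.1 hv
  have sx := hsum x
  have sv := hsum v
  have hS1 : (1 : Fin (m + 3)) ∈ S := by
    rw [hS, Finset.mem_erase, Finset.mem_erase]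
    refine ⟨?_, ?_, Finset.mem_univ _⟩
    · intro h; have := congrArg Fin.val h; simp at this
    · intro h; have := congrArg Fin.val h; simp at this
  have hB : b 1 ≤ ∑ i ∈ S, b i := Finset.single_le_sum (fun i _ => Nat.zero_le (b i)) hS1
  have hxb0 : x 0 ≤ b 0 := hx'.1 0
  have hvbl : v (Fin.last _) ≤ b (Fin.last _) := hv'.1 _
  have hVB : ∑ i ∈ S, v i ≤ ∑ i ∈ S, b i := Finset.sum_le_sum (fun i _ => hv'.1 i)
  obtain ⟨c, hc⟩ : ∃ c, c = min (v (Fin.last _)) (x (Fin.last _) + ∑ i ∈ S, x i) := ⟨_, rfl⟩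
  obtain ⟨p, hp1, hp2⟩ := exists_between_sum S v b (fun i _ => hv'.1 i)
    (∑ i ∈ S, v i + v (Fin.last _) - c) (by omega) (by omega)
  obtain ⟨q, hq1, hq2⟩ := exists_between_sum S (fun _ => 0) x (fun i _ => Nat.zero_le _)
    (∑ i ∈ S, x i + x (Fin.last _) - c) (by simp) (by omega)
  have hcb : c ≤ b (Fin.last _) := by omega
  let mk : ℕ → (Fin (m + 3) → ℕ) → Fin (m + 3) → ℕ := fun a t i =>
    if i = 0 then a else if i = Fin.last _ then c else t i
  have mk0 : ∀ a t, mk a t 0 = a := fun a t => by simp [mk]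
  have mkl : ∀ a t, mk a t (Fin.last _) = c := fun a t => by simp [mk, hl0]
  have mkm : ∀ a t, ∀ i ∈ S, mk a t i = t i := fun a t i hi => by
    rw [hS, Finset.mem_erase, Finset.mem_erase] at hi
    simp [mk, hi.1, hi.2.1]
  have hcases : ∀ i, i = 0 ∨ i = Fin.last _ ∨ i ∈ S := by
    intro i
    by_cases h1 : i = 0
    · exact Or.inl h1
    by_cases h2 : i = Fin.last _
    · exact Or.inr (Or.inl h2)
    · right; right
      rw [hS, Finset.mem_erase, Finset.mem_erase]
      exact ⟨h2, h1, Finset.mem_univ _⟩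
  have sy : ∑ i, mk (v 0) p i = d := by
    rw [hsum, mk0, mkl, Finset.sum_congr rfl (mkm (v 0) p), hp2]; omega
  have sy' : ∑ i, mk (x 0) q i = d := by
    rw [hsum, mk0, mkl, Finset.sum_congr rfl (mkm (x 0) q), hq2]; omega
  have hy : mk (v 0) p ∈ mbox b d := by
    refine mem_mbox.2 ⟨fun i => ?_, sy⟩
    rcases hcases i with rfl | rfl | hi
    · rw [mk0]; exact hv'.1 0
    · exact (mkl _ _).le.trans hcb
    · rw [mkm _ _ i hi]; exact (hp1 i hi).2
  have hy' : mk (x 0) q ∈ mbox b d := by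
    refine mem_mbox.2 ⟨fun i => ?_, sy'⟩
    rcases hcases i with rfl | rfl | hi
    · rw [mk0]; exact hx'.1 0
    · exact (mkl _ _).le.trans hcb
    · rw [mkm _ _ i hi]; exact (hq1 i hi).2.trans (hx'.1 i)
  have hyA : mk (v 0) p ∈ A := by
    refine h0 v hvA _ hy (mk0 _ _) (lk_le_of_raise ?_ (by rw [sy, hv'.2]))
    intro i hi
    rcases hcases i with rfl | rfl | hi
    · rw [mk0]
    · exact absurd rfl hi
    · rw [mkm _ _ i hi]; exact (hp1 i hi).1
  have hyA' : mk (x 0) q ∈ A := by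
    refine hl _ hyA _ hy' (by rw [mkl, mkl]) (le_of_lt ?_)
    refine lk_lt_iff.2 ⟨0, fun j hj => absurd hj (Fin.not_lt_zero j), ?_⟩
    rw [mk0, mk0]; exact hx0
  refine hxA (h0 _ hyA' x hx (mk0 _ _).symm (lk_le_of_raise ?_ (by rw [sy', hx'.2])))
  intro i hi
  rcases hcases i with rfl | rfl | hi
  · rw [mk0]
  · exact absurd rfl hi
  · rw [mkm _ _ i hi]; exact (hq1 i hi).2

lemma shad_exchange {n : ℕ} (b : Fin (n + 1) → ℕ) (d : ℕ) (A : Finset (Fin (n + 1) → ℕ))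
    (x v : Fin (n + 1) → ℕ) (hA : A ⊆ mbox b d)
    (hx : x ∈ mbox b d) (hvA : v ∈ A)
    (hmax : ∀ w ∈ mbox b d, lk x < lk w → w ∈ A)
    (hmin : ∀ w ∈ A, lk v ≤ lk w) (hlt : lk v < lk x)
    (hlast : v (Fin.last _) < x (Fin.last _)) [DecidableEq (Fin (n + 1) → ℕ)] :
    (shad b d (insert x (A.erase v))).card ≤ (shad b d A).card := by
  have hx' := mem_mbox.1 hx
  have hv' := mem_mbox.1 (hA hvA)
  have hxb : x (Fin.last _) ≤ b (Fin.last _) := hx'.1 _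
  set v1 := v + Pi.single (Fin.last _) 1 with hv1
  have hs1 : ∑ i, (Pi.single (Fin.last n) 1 : Fin (n + 1) → ℕ) i = 1 := by simp
  have hv1mem : v1 ∈ shad b d A := by
    refine mem_shad.2 ⟨mem_mbox.2 ⟨?_, ?_⟩, v, hvA, ?_⟩
    · intro i
      by_cases hi : i = Fin.last _
      · subst hi; simp [hv1]; omega
      · simp [hv1, hi]; exact hv'.1 i
    · simp [hv1, Finset.sum_add_distrib, hv'.2]
    · intro i; simp [hv1]
  have hsub : shad b d (insert x (A.erase v)) ⊆
      insert (x + Pi.single (Fin.last _) 1) ((shad b d A).erase v1) := by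
    intro z hz
    obtain ⟨hz1, u, hu, huz⟩ := mem_shad.1 hz
    have hz1' := mem_mbox.1 hz1
    rw [Finset.mem_insert, Finset.mem_erase]
    rcases Finset.mem_insert.1 hu with rfl | hu
    · -- u = x
      by_cases hul : u (Fin.last _) < z (Fin.last _)
      · left
        symm
        refine eq_of_le_sum ?_ ?_
        · intro i
          by_cases hi : i = Fin.last _
          · subst hi; simp; omega
          · simp [hi]; exact huz i
        · simp [Finset.sum_add_distrib, hx'.2, hz1'.2]
      · right
        have hul2 : z (Fin.last _) = u (Fin.last _) := by
          have : u (Fin.last _) ≤ z (Fin.last _) := huz _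
          omega
        set y := Function.update z (Fin.last n) (z (Fin.last n) - 1) with hy
        have hyl : y (Fin.last n) = z (Fin.last n) - 1 := by simp [hy]
        have hyn : ∀ i, i ≠ Fin.last n → y i = z i := fun i hi => by simp [hy, hi]
        have hyz : y ≤ z := by
          intro i
          by_cases hi : i = Fin.last _
          · rw [hi, hyl]; exact Nat.sub_le _ _
          · exact (hyn i hi).le
        have hysum : ∑ i, y i = d := by
          have e1 := hz1'.2
          rw [Fin.sum_univ_castSucc] at e1 ⊢
          rw [hyl]
          have : ∑ i : Fin n, y i.castSucc = ∑ i : Fin n, z i.castSucc :=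
            Finset.sum_congr rfl (fun i _ => hyn _ (Fin.castSucc_lt_last i).ne)
          omega
        have hymem : y ∈ mbox b d := mem_mbox.2 ⟨hyz.trans hz1'.1, hysum⟩
        have hxy : lk u ≤ lk y := by
          refine lk_le_of_raise ?_ (by rw [hysum, hx'.2])
          intro i hi
          rw [hyn i hi]; exact huz i
        have hxy' : lk u < lk y := by
          refine lt_of_le_of_ne hxy (fun h => ?_)
          have := congrFun (lk_inj h) (Fin.last n)
          omega
        have hyA := hmax y hymem hxy'
        refine ⟨?_, mem_shad.2 ⟨hz1, y, hyA, hyz⟩⟩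
        intro h
        -- z = v1 forces y = v
        have : y = v := by
          funext i
          by_cases hi : i = Fin.last _
          · subst hi; rw [hyl, h]; simp [hv1]
          · rw [hyn i hi, h]; simp [hv1, hi]
        rw [this] at hxy'
        exact absurd hlt (not_lt.2 hxy'.le)
    · right
      rw [Finset.mem_erase] at hu
      refine ⟨?_, mem_shad.2 ⟨hz1, u, hu.2, huz⟩⟩
      intro h
      have hul : lk u ≤ lk v := by
        refine lk_le_of_raise ?_ (by rw [hv'.2, (mem_mbox.1 (hA hu.2)).2])
        intro i hi
        have : u i ≤ z i := huz i
        rw [h] at this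
        simpa [hv1, hi] using this
      exact hu.1 (lk_inj (le_antisymm hul (hmin u hu.2)))
  refine (Finset.card_le_card hsub).trans ((Finset.card_insert_le _ _).trans ?_)
  rw [Finset.card_erase_of_mem hv1mem]
  have : 0 < (shad b d A).card := Finset.card_pos.2 ⟨_, hv1mem⟩
  omega

theorem clements_lindstrom : ∀ (n : ℕ) (b : Fin n → ℕ), Monotone b → CLfor b := by
  classical
  intro n
  induction n with
  | zero => intro b _; exact CL_of_le_one (by omega) b
  | succ n ih =>
    intro b hb
    rcases Nat.lt_or_ge n 2 with hn | hn
    · interval_cases n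
      · exact CL_of_le_one (by omega) b
      · exact CL_two b (hb (by simp))
    obtain ⟨m, rfl⟩ : ∃ m, n = m + 2 := ⟨n - 2, by omega⟩
    intro d A L hA hL hc
    set X := mbox b d with hX
    let f : (Fin (m + 3) → ℕ) → ℕ := fun u => (X.filter (fun w => lk w < lk u)).card
    have hf : ∀ x ∈ X, ∀ y ∈ X, lk x < lk y → f x < f y := by
      intro x hx y hy hxy
      refine Finset.card_lt_card ((Finset.ssubset_iff_of_subset ?_).2 ⟨x, ?_, ?_⟩)
      · intro w hw
        rw [Finset.mem_filter] at hw ⊢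
        exact ⟨hw.1, hw.2.trans hxy⟩
      · exact Finset.mem_filter.2 ⟨hx, hxy⟩
      · exact fun h => lt_irrefl _ (Finset.mem_filter.1 h).2
    let F := X.powerset.filter (fun B => B.card = A.card ∧ (shad b d B).card ≤ (shad b d A).card)
    have mF : ∀ B, B ∈ F ↔ B ⊆ X ∧ B.card = A.card ∧ (shad b d B).card ≤ (shad b d A).card := by
      intro B; simp [F]
    obtain ⟨B, hB, hBmax⟩ := Finset.exists_max_image F (fun B => ∑ u ∈ B, f u)
      ⟨A, (mF A).2 ⟨hA, rfl, le_rfl⟩⟩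
    obtain ⟨hBX, hBc, hBs⟩ := (mF B).1 hB
    have hcompr : ∀ p : Fin (m + 3), ∀ u ∈ B, ∀ w ∈ X, w p = u p → lk u ≤ lk w → w ∈ B := by
      intro p u hu w hw hwu hle
      have hmono : Monotone (p.removeNth b) := by
        intro i j hij
        exact hb (Fin.succAbove_le_succAbove_iff.2 hij)
      have hsh := shad_fcomp p b (ih _ hmono) d hBX
      have heq : fcomp lk (fun u : Fin (m + 3) → ℕ => u p) X B = B := by
        refine fcomp_weight lk_inj _ hBX f hf ?_
        refine hBmax _ ((mF _).2 ⟨fcomp_subset _ _ _ _, ?_, hsh.trans hBs⟩)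
        rw [fcomp_card lk_inj _ hBX, hBc]
      rcases hle.lt_or_eq with h | h
      · have hseg := topSeg_upSeg lk (X.filter (fun z => z p = u p))
          (B.filter (fun z => z p = u p)).card
        rw [← fcomp_fiber lk (fun u : Fin (m + 3) → ℕ => u p) X B (u p), heq] at hseg
        exact (Finset.mem_filter.1 (hseg.2 u (Finset.mem_filter.2 ⟨hu, rfl⟩) w
          (Finset.mem_filter.2 ⟨hw, hwu⟩) h)).1
      · exact lk_inj h ▸ hu
    have hBup : UpSeg lk X B := by
      refine ⟨hBX, ?_⟩
      intro y hy x' hx' hyx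
      by_contra hx'B
      obtain ⟨x, hx, hxmax⟩ := Finset.exists_max_image (X \ B) lk
        ⟨x', Finset.mem_sdiff.2 ⟨hx', hx'B⟩⟩
      obtain ⟨v, hv, hvmin⟩ := Finset.exists_min_image B lk ⟨y, hy⟩
      rw [Finset.mem_sdiff] at hx
      have hlt : lk v < lk x :=
        lt_of_le_of_lt (hvmin y hy) (lt_of_lt_of_le hyx
          (hxmax x' (Finset.mem_sdiff.2 ⟨hx', hx'B⟩)))
      have hlast := exchange_last b (hb (Fin.zero_le _)) d B (hcompr 0) (hcompr (Fin.last _)) x v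
        hx.1 (hBX hv) hx.2 hv hlt
      have hsh := shad_exchange b d B x v hBX hx.1 hv (fun w hw hxw => by
        by_contra hwB
        exact absurd (hxmax w (Finset.mem_sdiff.2 ⟨hw, hwB⟩)) (not_le.2 hxw)) hvmin hlt hlast
      have hxe : x ∉ B.erase v := fun h => hx.2 (Finset.mem_of_mem_erase h)
      have : ∑ u ∈ insert x (B.erase v), f u ≤ ∑ u ∈ B, f u :=
        hBmax (insert x (B.erase v)) ((mF _).2 ⟨?_, ?_, hsh.trans hBs⟩)
      · rw [Finset.sum_insert hxe] at this
        have e := Finset.add_sum_erase B f hv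
        have := hf v (hBX hv) x hx.1 hlt
        omega
      · intro w hw
        rcases Finset.mem_insert.1 hw with rfl | hw
        · exact hx.1
        · exact hBX (Finset.mem_of_mem_erase hw)
      · rw [Finset.card_insert_of_notMem hxe, Finset.card_erase_of_mem hv]
        have : 0 < B.card := Finset.card_pos.2 ⟨v, hv⟩
        omega
    have hLB : L ⊆ B := hL.subset_of_card_le lk_inj hBup (by omega)
    exact (Finset.card_le_card (shad_mono hLB)).trans hBs

end CLmain

section Reg
variable {K : Type} [Field K]

def DepthPos {N : ℕ} (F : Ideal (MvPolynomial (Fin N) K)) : Prop :=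
  ∀ u, (∀ k, X k * u ∈ F) → u ∈ F

noncomputable def linForm {N : ℕ} (c : Fin N → K) : MvPolynomial (Fin N) K := ∑ k, c k • X k

lemma exists_regular_linear [Infinite K] {N m : ℕ} (F : Fin m → Ideal (MvPolynomial (Fin N) K))
    (hF : ∀ i, DepthPos (F i)) : ∃ c : Fin N → K, ∀ i u, linForm c * u ∈ F i → u ∈ F i := by
  classical
  let S := MvPolynomial (Fin N) K
  let L : (Fin N → K) →ₗ[K] S :=
    { toFun := linForm
      map_add' := fun a b => by simp [linForm, add_smul, Finset.sum_add_distrib]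
      map_smul' := fun a b => by simp [linForm, mul_smul, Finset.smul_sum] }
  let ι := Σ i : Fin m, ↥(associatedPrimes S (S ⧸ F i))
  have : ∀ i, Finite ↥(associatedPrimes S (S ⧸ F i)) := fun i => (associatedPrimes.finite S _)
  have : Finite ι := inferInstance
  let W : ι → Subspace K (Fin N → K) := fun q => (Submodule.restrictScalars K q.2.1).comap L
  by_contra hcon
  push Not at hcon
  have hcov : ⋃ q, (W q : Set (Fin N → K)) = Set.univ := by
    rw [Set.eq_univ_iff_forall]
    intro c
    obtain ⟨i, u, hu, hu'⟩ := hcon c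
    have h1 : linForm c ∈ {s : S | ∃ x : S ⧸ F i, x ≠ 0 ∧ s • x = 0} := by
      refine ⟨Ideal.Quotient.mk (F i) u, fun h => hu' (Ideal.Quotient.eq_zero_iff_mem.1 h), ?_⟩
      exact Ideal.Quotient.eq_zero_iff_mem.2 hu
    rw [← biUnion_associatedPrimes_eq_zero_divisors, Set.mem_iUnion₂] at h1
    obtain ⟨p, hp, hcp⟩ := h1
    exact Set.mem_iUnion.2 ⟨⟨i, p, hp⟩, hcp⟩
  obtain ⟨⟨i, p, hp⟩, hq⟩ := Subspace.exists_eq_top_of_iUnion_eq_univ hcov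
  have hX : ∀ k, (X k : S) ∈ p := by
    intro k
    have : Pi.single k (1 : K) ∈ W ⟨i, p, hp⟩ := by rw [hq]; trivial
    have h2 : linForm (Pi.single k (1 : K)) ∈ p := this
    have h3 : linForm (Pi.single k (1 : K)) = X k := by
      simp [linForm, Pi.single_apply]
    rwa [h3] at h2
  obtain ⟨hpp, x, hx⟩ := isAssociatedPrime_iff.1 hp
  obtain ⟨u, rfl⟩ := Ideal.Quotient.mk_surjective x
  apply hpp.ne_top
  rw [Ideal.eq_top_iff_one, hx, Submodule.mem_colon_singleton]
  rw [Submodule.mem_bot, one_smul]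
  refine Ideal.Quotient.eq_zero_iff_mem.2 (hF i u (fun k => ?_))
  have := hX k
  rw [hx, Submodule.mem_colon_singleton, Submodule.mem_bot] at this
  exact Ideal.Quotient.eq_zero_iff_mem.1 this

lemma exists_proj {N : ℕ} (c : Fin (N + 1) → K) (hc : linForm c ≠ 0) :
    ∃ π : MvPolynomial (Fin (N + 1)) K →ₐ[K] MvPolynomial (Fin N) K,
      Function.Surjective π ∧ (∀ h, π h = 0 ↔ linForm c ∣ h) ∧
      (∀ f d, f.IsHomogeneous d → (π f).IsHomogeneous d) ∧
      ∀ j, ∃ e, π (X e) = X j := by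
  obtain ⟨p, hp⟩ : ∃ p, c p ≠ 0 := by
    by_contra h
    push Not at h
    exact hc (by simp [linForm, h])
  let v : Fin (N + 1) → MvPolynomial (Fin N) K :=
    p.insertNth (-((c p)⁻¹ • ∑ i, c (p.succAbove i) • X i)) (fun i => X i)
  have vp : v p = -((c p)⁻¹ • ∑ i, c (p.succAbove i) • X i) := by simp [v]
  have vs : ∀ i, v (p.succAbove i) = X i := fun i => by simp [v]
  let π : MvPolynomial (Fin (N + 1)) K →ₐ[K] MvPolynomial (Fin N) K := aeval v
  let σ : MvPolynomial (Fin N) K →ₐ[K] MvPolynomial (Fin (N + 1)) K := rename p.succAbove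
  have hπσ : ∀ h, π (σ h) = h := by
    intro h
    have : π.comp σ = AlgHom.id K _ := by
      ext i : 1
      simp [π, σ, vs]
    exact congrArg (fun φ => φ h) this
  have hg : π (linForm c) = 0 := by
    simp only [linForm, map_sum, map_smul, π, aeval_X]
    rw [Fin.sum_univ_succAbove _ p, vp]
    simp only [vs]
    rw [smul_neg, smul_smul, mul_inv_cancel₀ hp, one_smul]
    simp
  refine ⟨π, fun h => ⟨σ h, hπσ h⟩, ?_, ?_, ?_⟩
  · intro h
    constructor
    · intro h0
      have key : (Ideal.Quotient.mkₐ K (Ideal.span {linForm c})).comp (σ.comp π) =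
          Ideal.Quotient.mkₐ K (Ideal.span {linForm c}) := by
        ext i : 1
        simp only [AlgHom.comp_apply, Ideal.Quotient.mkₐ_eq_mk]
        rw [Ideal.Quotient.eq, Ideal.mem_span_singleton]
        rcases Fin.eq_self_or_eq_succAbove p i with rfl | ⟨j, rfl⟩
        · refine ⟨-C (c i)⁻¹, ?_⟩
          simp only [π, aeval_X, vp, linForm, σ, map_neg, map_smul, map_sum, rename_X]
          rw [Fin.sum_univ_succAbove _ i, ← C_mul', ← C_mul']
          have : (C (c i) * C (c i)⁻¹ : MvPolynomial (Fin (N + 1)) K) = 1 := by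
            rw [← C_mul, mul_inv_cancel₀ hp, C_1]
          linear_combination (X i) * this
        · simp [π, σ, vs]
      have h1 := congrArg (fun φ => φ h) key
      simp only [AlgHom.comp_apply, Ideal.Quotient.mkₐ_eq_mk, h0, map_zero] at h1
      exact Ideal.mem_span_singleton.1 (Ideal.Quotient.eq_zero_iff_mem.1 h1.symm)
    · rintro ⟨w, rfl⟩
      rw [map_mul, hg, zero_mul]
  · intro f d hf
    have := hf.aeval (n := 1) v (fun i => ?_)
    · rwa [one_mul] at this
    · rcases Fin.eq_self_or_eq_succAbove p i with rfl | ⟨j, rfl⟩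
      · rw [vp]
        refine (homogeneousSubmodule (Fin N) K 1).neg_mem ?_
        refine Submodule.smul_mem _ _ (Submodule.sum_mem _ (fun j _ => Submodule.smul_mem _ _ ?_))
        exact isHomogeneous_X _ _
      · rw [vs]; exact isHomogeneous_X _ _
  · intro j
    exact ⟨p.succAbove j, by simp [π, vs]⟩

def Fm {S : Type*} [CommRing S] (f : ℕ → S) (i : ℕ) : Ideal S := Ideal.span (f '' {j | j < i})

def WReg {S : Type*} [CommRing S] (f : ℕ → S) (r : ℕ) : Prop :=
  ∀ i < r, ∀ g, f i * g ∈ Fm f i → g ∈ Fm f i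

lemma Fm_zero {S : Type*} [CommRing S] (f : ℕ → S) : Fm f 0 = ⊥ := by simp [Fm]

lemma mem_Fm_succ {S : Type*} [CommRing S] (f : ℕ → S) (i : ℕ) (u : S) :
    u ∈ Fm f (i + 1) ↔ ∃ w, u - f i * w ∈ Fm f i := by
  have : f '' {j | j < i + 1} = insert (f i) (f '' {j | j < i}) := by
    rw [← Set.image_insert_eq]
    congr 1
    ext j
    simp only [Set.mem_ofPred_eq, Set.mem_insert_iff]
    omega
  rw [Fm, this, Ideal.mem_span_insert]
  constructor
  · rintro ⟨a, z, hz, rfl⟩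
    exact ⟨a, by rw [mul_comm, add_sub_cancel_left]; exact hz⟩
  · rintro ⟨w, hw⟩
    exact ⟨w, _, hw, by ring⟩

lemma Fm_le_succ {S : Type*} [CommRing S] (f : ℕ → S) (i : ℕ) : Fm f i ≤ Fm f (i + 1) :=
  fun u hu => (mem_Fm_succ f i u).2 ⟨0, by simpa using hu⟩

section
variable {S R : Type*} [CommRing S] [CommRing R] (π : S →+* R)

lemma map_Fm (f : ℕ → S) (i : ℕ) : (Fm f i).map π = Fm (fun j => π (f j)) i := by
  rw [Fm, Ideal.map_span, Set.image_image]; rfl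

lemma mem_map_proj {g : S} (hs : Function.Surjective π) (hk : ∀ h, π h = 0 ↔ g ∣ h) (F : Ideal S)
    (u : S) : π u ∈ F.map π ↔ ∃ w, u - g * w ∈ F := by
  rw [Ideal.mem_map_iff_of_surjective π hs]
  constructor
  · rintro ⟨x, hx, hxu⟩
    obtain ⟨w, hw⟩ := (hk (u - x)).1 (by rw [map_sub, hxu, sub_self])
    exact ⟨w, by rw [← hw]; simpa using hx⟩
  · rintro ⟨w, hw⟩
    refine ⟨_, hw, ?_⟩
    rw [map_sub, (hk (g * w)).2 (dvd_mul_right _ _), sub_zero]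

lemma wreg_proj {g : S} (hs : Function.Surjective π) (hk : ∀ h, π h = 0 ↔ g ∣ h) (f : ℕ → S)
    (r : ℕ) (hf : WReg f r) (hg : ∀ i ≤ r, ∀ u, g * u ∈ Fm f i → u ∈ Fm f i) :
    WReg (fun j => π (f j)) r := by
  intro i hi h hh
  obtain ⟨u, rfl⟩ := hs h
  rw [← map_Fm, ← map_mul, mem_map_proj π hs hk] at hh
  rw [← map_Fm, mem_map_proj π hs hk]
  obtain ⟨v, hv⟩ := hh
  have h1 : v ∈ Fm f (i + 1) := by
    refine hg (i + 1) hi v ((mem_Fm_succ f i _).2 ⟨u, ?_⟩)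
    rw [← neg_mem_iff]
    convert hv using 1; ring
  obtain ⟨w, hw⟩ := (mem_Fm_succ f i _).1 h1
  refine ⟨w, hf i hi _ ?_⟩
  have := add_mem hv (Ideal.mul_mem_left _ g hw)
  convert this using 1; ring

end

lemma depthPos_Fm [Infinite K] : ∀ (r N : ℕ) (f : ℕ → MvPolynomial (Fin N) K), WReg f r → r < N →
    DepthPos (Fm f r) := by
  intro r
  induction r using Nat.strong_induction_on with
  | _ r ih =>
  intro N f hf hr
  rcases r with _ | r
  · intro u hu
    rw [Fm_zero] at hu ⊢
    have := hu ⟨0, hr⟩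
    rw [Submodule.mem_bot] at this ⊢
    exact (mul_eq_zero.1 this).resolve_left (X_ne_zero _)
  obtain ⟨N, rfl⟩ : ∃ M, N = M + 1 := ⟨N - 1, by omega⟩
  obtain ⟨c, hc⟩ := exists_regular_linear (fun i : Fin (r + 1) => Fm f i)
    (fun i => ih i i.2 _ f (fun j hj => hf j (hj.trans i.2)) (by omega))
  have hg : ∀ i ≤ r, ∀ u, linForm c * u ∈ Fm f i → u ∈ Fm f i :=
    fun i hi u => hc ⟨i, by omega⟩ u
  have hg0 : linForm c ≠ 0 := by
    intro h
    have := hg 0 (Nat.zero_le _) 1 (by rw [h, zero_mul]; exact zero_mem _)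
    rw [Fm_zero, Submodule.mem_bot] at this
    exact one_ne_zero this
  obtain ⟨π, hs, hk, -, hX⟩ := exists_proj c hg0
  have hw := wreg_proj π.toRingHom hs hk f r (fun j hj => hf j (by omega)) hg
  have hd := ih r (by omega) N _ hw (by omega)
  intro u hu
  have hgu : linForm c * u ∈ Fm f (r + 1) := by
    rw [linForm, Finset.sum_mul]
    refine sum_mem (fun k _ => ?_)
    rw [smul_mul_assoc, ← C_mul']
    exact Ideal.mul_mem_left _ _ (hu k)
  obtain ⟨v, hv⟩ := (mem_Fm_succ f r _).1 hgu
  have hXv : ∀ k, ∃ w, X k * v - linForm c * w ∈ Fm f r := by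
    intro k
    obtain ⟨w, hw⟩ := (mem_Fm_succ f r _).1 (hu k)
    refine ⟨w, hf r (by omega) _ ?_⟩
    have := sub_mem (Ideal.mul_mem_left _ (linForm c) hw) (Ideal.mul_mem_left _ (X k) hv)
    convert this using 1; ring
  have hpv : π v ∈ Fm (fun j => π (f j)) r := by
    refine hd (π v) (fun j => ?_)
    obtain ⟨e, he⟩ := hX j
    rw [← he, ← map_mul]
    have := (mem_map_proj π.toRingHom hs hk (Fm f r) (X e * v)).2 (hXv e)
    rw [map_Fm] at this
    exact this
  have := (mem_map_proj π.toRingHom hs hk (Fm f r) v).1 (by rw [map_Fm]; exact hpv)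
  obtain ⟨w, hw⟩ := this
  refine (mem_Fm_succ f r u).2 ⟨w, hg r le_rfl _ ?_⟩
  have := add_mem hv (Ideal.mul_mem_left _ (f r) hw)
  convert this using 1; ring

end Reg

section Hilb
variable {K : Type} [Field K]

lemma hc_shift {N M : ℕ} (φ : MvPolynomial (Fin N) K →ₗ[K] MvPolynomial (Fin M) K) (e : ℕ)
    (hφ : ∀ f d, f.IsHomogeneous d → (φ f).IsHomogeneous (d + e)) (u : MvPolynomial (Fin N) K)
    (d : ℕ) : homogeneousComponent (d + e) (φ u) = φ (homogeneousComponent d u) := by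
  classical
  conv_lhs => rw [← sum_homogeneousComponent u]
  rw [map_sum, map_sum]
  have h1 : ∀ i ∈ Finset.range (u.totalDegree + 1),
      homogeneousComponent (d + e) (φ (homogeneousComponent i u)) =
      if i = d then φ (homogeneousComponent i u) else 0 := by
    intro i _
    rw [homogeneousComponent_of_mem (hφ _ i (homogeneousComponent_isHomogeneous i u))]
    by_cases h : i = d
    · simp [h]
    · rw [if_neg h, if_neg (by omega)]
  rw [Finset.sum_congr rfl h1, Finset.sum_ite_eq']
  split_ifs with h
  · rfl
  · rw [homogeneousComponent_eq_zero _ _ (by simpa using h), map_zero]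

lemma hc_shift_lt {N M : ℕ} (φ : MvPolynomial (Fin N) K →ₗ[K] MvPolynomial (Fin M) K) (e : ℕ)
    (hφ : ∀ f d, f.IsHomogeneous d → (φ f).IsHomogeneous (d + e)) (u : MvPolynomial (Fin N) K)
    (d : ℕ) (hd : d < e) : homogeneousComponent d (φ u) = 0 := by
  classical
  conv_lhs => rw [← sum_homogeneousComponent u]
  rw [map_sum, map_sum]
  refine Finset.sum_eq_zero (fun i _ => ?_)
  rw [homogeneousComponent_of_mem (hφ _ i (homogeneousComponent_isHomogeneous i u)),
    if_neg (by omega)]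

instance finite_homog (N d : ℕ) : Module.Finite K (homogeneousSubmodule (Fin N) K d) :=
  Module.Finite.iff_fg.2 (homogeneousSubmodule_fg (Fin N) K d)

instance finite_piece {N : ℕ} (I : Ideal (MvPolynomial (Fin N) K)) (d : ℕ) :
    Module.Finite K ↥(Submodule.restrictScalars K I ⊓ homogeneousSubmodule (Fin N) K d) :=
  Submodule.finiteDimensional_of_le inf_le_right

/-- colon ideal by a power -/
def cgp {S : Type*} [CommRing S] (g : S) (I : Ideal S) (j : ℕ) : Ideal S :=
  Submodule.comap (LinearMap.mulLeft S (g ^ j)) I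

lemma mem_cgp {S : Type*} [CommRing S] {g : S} {I : Ideal S} {j : ℕ} {u : S} :
    u ∈ cgp g I j ↔ g ^ j * u ∈ I := Iff.rfl

lemma cgp_zero {S : Type*} [CommRing S] (g : S) (I : Ideal S) : cgp g I 0 = I := by
  ext u; rw [mem_cgp, pow_zero, one_mul]

lemma cgp_cgp {S : Type*} [CommRing S] (g : S) (I : Ideal S) (i j : ℕ) :
    cgp g (cgp g I i) j = cgp g I (i + j) := by
  ext u; rw [mem_cgp, mem_cgp, mem_cgp, pow_add, mul_assoc]

lemma cgp_mono {S : Type*} [CommRing S] (g : S) (I : Ideal S) {i j : ℕ} (h : i ≤ j) :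
    cgp g I i ≤ cgp g I j := by
  intro u hu
  obtain ⟨k, rfl⟩ := Nat.exists_eq_add_of_le h
  rw [mem_cgp] at hu ⊢
  rw [pow_add, mul_comm (g ^ i), mul_assoc]
  exact Ideal.mul_mem_left _ _ hu

lemma hilb_mono {N : ℕ} {I J : Ideal (MvPolynomial (Fin N) K)} (h : I ≤ J) (d : ℕ) :
    hilb I d ≤ hilb J d :=
  Submodule.finrank_mono (inf_le_inf_right _ h)

structure IsProj {N : ℕ} (π : MvPolynomial (Fin (N + 1)) K →ₐ[K] MvPolynomial (Fin N) K)
    (g : MvPolynomial (Fin (N + 1)) K) : Prop where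
  surj : Function.Surjective π
  ker : ∀ h, π h = 0 ↔ g ∣ h
  hom : ∀ f d, f.IsHomogeneous d → (π f).IsHomogeneous d
  gh : g.IsHomogeneous 1
  g0 : g ≠ 0

section
variable {N : ℕ} {π : MvPolynomial (Fin (N + 1)) K →ₐ[K] MvPolynomial (Fin N) K}
  {g : MvPolynomial (Fin (N + 1)) K} 
  {I : Ideal (MvPolynomial (Fin (N + 1)) K)}

lemma IsProj.hc (hp : IsProj π g) (u : MvPolynomial (Fin (N + 1)) K) (d : ℕ) :
    homogeneousComponent d (π u) = π (homogeneousComponent d u) :=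
  hc_shift π.toLinearMap 0 (fun f d hf => hp.hom f d hf) u d

lemma IsProj.homog_map (hp : IsProj π g) (hI : IsHomog I) : IsHomog (I.map π) := by
  intro y hy d
  rw [Ideal.mem_map_iff_of_surjective π hp.surj] at hy
  obtain ⟨x, hx, rfl⟩ := hy
  rw [hp.hc]
  exact Ideal.mem_map_of_mem _ (hI x hx d)

lemma gmul_hom {N : ℕ} {g : MvPolynomial (Fin N) K} {e : ℕ} (hg : g.IsHomogeneous e) :
    ∀ f d, f.IsHomogeneous d → ((LinearMap.mulLeft K g) f).IsHomogeneous (d + e) := by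
  intro f d hf
  rw [LinearMap.mulLeft_apply, add_comm]
  exact hg.mul hf

lemma homog_cgp {N : ℕ} {g : MvPolynomial (Fin N) K} (hg : g.IsHomogeneous 1)
    {I : Ideal (MvPolynomial (Fin N) K)} (hI : IsHomog I) (j : ℕ) : IsHomog (cgp g I j) := by
  intro u hu d
  rw [mem_cgp] at hu ⊢
  have h1 : (g ^ j).IsHomogeneous j := by simpa using hg.pow j
  have := hc_shift (LinearMap.mulLeft K (g ^ j)) j (gmul_hom h1) u d
  rw [LinearMap.mulLeft_apply, LinearMap.mulLeft_apply] at this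
  rw [← this]
  exact hI _ hu _

lemma IsProj.map_piece (hp : IsProj π g) (hI : IsHomog I) (d : ℕ) :
    (Submodule.restrictScalars K I ⊓ homogeneousSubmodule (Fin (N + 1)) K d).map π.toLinearMap =
    Submodule.restrictScalars K (I.map π) ⊓ homogeneousSubmodule (Fin N) K d := by
  apply le_antisymm
  · rintro _ ⟨x, ⟨hx1, hx2⟩, rfl⟩
    exact ⟨Ideal.mem_map_of_mem π hx1, hp.hom x d hx2⟩
  · rintro y ⟨hy1, hy2⟩
    have hy1 : y ∈ I.map π := hy1
    rw [Ideal.mem_map_iff_of_surjective π hp.surj] at hy1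
    obtain ⟨x, hx, rfl⟩ := hy1
    refine ⟨homogeneousComponent d x, ⟨hI x hx d, homogeneousComponent_isHomogeneous d x⟩, ?_⟩
    change π (homogeneousComponent d x) = π x
    rw [← hp.hc, homogeneousComponent_eq_self hy2]

lemma finrank_split {V W : Type*} [AddCommGroup V] [Module K V] [AddCommGroup W] [Module K W]
    (φ : V →ₗ[K] W) (A : Submodule K V) [Module.Finite K A] :
    Module.finrank K A = Module.finrank K ↥(LinearMap.ker φ ⊓ A) +
      Module.finrank K (A.map φ) := by
  have h := LinearMap.finrank_range_add_finrank_ker (φ.domRestrict A)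
  rw [LinearMap.range_domRestrict] at h
  have h2 : (LinearMap.ker (φ.domRestrict A)).map A.subtype = LinearMap.ker φ ⊓ A := by
    ext x
    simp [LinearMap.domRestrict_apply, and_comm]
  have h3 := (Submodule.equivMapOfInjective A.subtype A.injective_subtype
    (LinearMap.ker (φ.domRestrict A))).finrank_eq
  rw [h2] at h3
  omega

lemma IsProj.ker_succ (hp : IsProj π g) (d : ℕ) :
    LinearMap.ker π.toLinearMap ⊓
      (Submodule.restrictScalars K I ⊓ homogeneousSubmodule (Fin (N + 1)) K (d + 1)) =
    (Submodule.restrictScalars K (cgp g I 1) ⊓ homogeneousSubmodule (Fin (N + 1)) K d).map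
      (LinearMap.mulLeft K g) := by
  apply le_antisymm
  · rintro x ⟨hx0, hx1, hx2⟩
    obtain ⟨u, rfl⟩ := (hp.ker x).1 hx0
    have e := hc_shift (LinearMap.mulLeft K g) 1 (gmul_hom hp.gh) u d
    rw [LinearMap.mulLeft_apply, LinearMap.mulLeft_apply, homogeneousComponent_eq_self hx2] at e
    refine ⟨homogeneousComponent d u, ⟨?_, homogeneousComponent_isHomogeneous d u⟩, e.symm⟩
    change _ ∈ cgp g I 1
    rw [mem_cgp, pow_one, ← e]
    exact hx1
  · rintro _ ⟨u, ⟨hu1, hu2⟩, rfl⟩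
    refine ⟨(hp.ker _).2 (dvd_mul_right g u), ?_, gmul_hom hp.gh u d hu2⟩
    have : u ∈ cgp g I 1 := hu1
    rw [mem_cgp, pow_one] at this
    exact this

lemma IsProj.ker_zero (hp : IsProj π g) :
    LinearMap.ker π.toLinearMap ⊓
      (Submodule.restrictScalars K I ⊓ homogeneousSubmodule (Fin (N + 1)) K 0) = ⊥ := by
  rw [eq_bot_iff]
  rintro x ⟨hx0, hx1, hx2⟩
  obtain ⟨u, rfl⟩ := (hp.ker x).1 hx0
  have e := hc_shift_lt (LinearMap.mulLeft K g) 1 (gmul_hom hp.gh) u 0 one_pos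
  rw [LinearMap.mulLeft_apply, homogeneousComponent_eq_self hx2] at e
  exact e

lemma IsProj.hilb_zero (hp : IsProj π g) (hI : IsHomog I) : hilb I 0 = hilb (I.map π) 0 := by
  rw [hilb, finrank_split π.toLinearMap, hp.ker_zero, hp.map_piece hI, finrank_bot, zero_add]
  rfl

lemma IsProj.hilb_succ (hp : IsProj π g) (hI : IsHomog I) (d : ℕ) :
    hilb I (d + 1) = hilb (cgp g I 1) d + hilb (I.map π) (d + 1) := by
  rw [hilb, finrank_split π.toLinearMap, hp.ker_succ, hp.map_piece hI]
  have hinj : Function.Injective (LinearMap.mulLeft K g) := mul_right_injective₀ hp.g0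
  rw [← (Submodule.equivMapOfInjective (LinearMap.mulLeft K g) hinj
    (Submodule.restrictScalars K (cgp g I 1) ⊓ homogeneousSubmodule (Fin (N + 1)) K d)).finrank_eq]
  rfl

lemma IsProj.hilb_sum (hp : IsProj π g) (hI : IsHomog I) (d : ℕ) :
    hilb I d = ∑ j ∈ Finset.range (d + 1), hilb ((cgp g I j).map π) (d - j) := by
  induction d generalizing I with
  | zero => simp [hp.hilb_zero hI, cgp_zero]
  | succ d ih =>
    rw [hp.hilb_succ hI, ih (homog_cgp hp.gh hI 1), Finset.sum_range_succ' _ (d + 1)]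
    rw [cgp_zero, Nat.sub_zero]
    refine congrArg (· + hilb (I.map π) (d + 1)) ?_
    refine Finset.sum_congr rfl (fun j _ => ?_)
    rw [cgp_cgp, add_comm 1 j, Nat.add_sub_add_right]

end
end Hilb

section Comb

/-- all monomials of degree `d` -/
def degM (n d : ℕ) : Finset (Fin n → ℕ) := mbox (fun _ => d) d

lemma mem_degM {n d : ℕ} {u : Fin n → ℕ} : u ∈ degM n d ↔ ∑ i, u i = d := by
  rw [degM, mem_mbox]
  refine ⟨fun h => h.2, fun h => ⟨fun i => ?_, h⟩⟩
  change u i ≤ d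
  rw [← h]
  exact Finset.single_le_sum (fun i _ => Nat.zero_le (u i)) (Finset.mem_univ i)

variable {n r : ℕ} (hr : r ≤ n) (a : Fin r → ℕ)

/-- degree `d` monomials outside of `(x_i ^ a_i)` -/
def Nm (d : ℕ) : Finset (Fin n → ℕ) :=
  (degM n d).filter (fun u => ∀ i : Fin r, u (Fin.castLE hr i) < a i)

def bb (n : ℕ) (D : ℕ) : Fin n → ℕ := fun i => if h : (i : ℕ) < r then a ⟨i, h⟩ - 1 else D

lemma bb_mono (hmono : Monotone a) (D : ℕ) (hD : ∀ i, a i ≤ D) : Monotone (bb a n D) := by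
  intro i j hij
  have hij' : (i : ℕ) ≤ j := hij
  unfold bb
  split_ifs with h1 h2 h2
  · exact Nat.sub_le_sub_right (hmono hij') 1
  · have := hD ⟨i, h1⟩
    omega
  · omega
  · exact le_rfl

lemma mbox_bb (ha : ∀ i, 2 ≤ a i) (D d : ℕ) (hD : d ≤ D) : mbox (bb a n D) d = Nm hr a d := by
  ext u
  rw [mem_mbox, Nm, Finset.mem_filter, mem_degM]
  constructor
  · rintro ⟨h1, h2⟩
    refine ⟨h2, fun i => ?_⟩
    have h3 := h1 (Fin.castLE hr i)
    have h4 := ha i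
    simp only [bb, Fin.val_castLE, i.2, dif_pos] at h3
    simp only [Fin.eta] at h3
    omega
  · rintro ⟨h1, h2⟩
    refine ⟨fun i => ?_, h1⟩
    unfold bb
    split_ifs with h
    · have := h2 ⟨i, h⟩
      have e : Fin.castLE hr ⟨i, h⟩ = i := by ext; simp
      rw [e] at this
      exact Nat.le_sub_one_of_lt this
    · refine le_trans ?_ hD
      rw [← h1]
      exact Finset.single_le_sum (fun i _ => Nat.zero_le (u i)) (Finset.mem_univ i)

/-- lex-plus-powers monomials -/
noncomputable def Lam (s d : ℕ) : Finset (Fin n → ℕ) :=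
  open Classical in (degM n d \ Nm hr a d) ∪
    topSeg lk (Nm hr a d) (s - (degM n d \ Nm hr a d).card)

lemma mem_Lam {s d : ℕ} {u : Fin n → ℕ} : u ∈ Lam hr a s d ↔
    (u ∈ degM n d ∧ u ∉ Nm hr a d) ∨
      u ∈ topSeg lk (Nm hr a d) (s - (degM n d \ Nm hr a d).card) := by
  classical
  rw [Lam, Finset.mem_union, Finset.mem_sdiff]

lemma Lam_subset (s d : ℕ) : Lam hr a s d ⊆ degM n d := by
  intro u hu
  rcases (mem_Lam hr a).1 hu with h | h
  · exact h.1
  · exact (Finset.mem_filter.1 ((topSeg_upSeg lk _ _).1 h)).1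

lemma Lam_mono {s t : ℕ} (h : s ≤ t) (d : ℕ) : Lam hr a s d ⊆ Lam hr a t d := by
  intro u hu
  rw [mem_Lam] at hu ⊢
  exact hu.imp id (fun hu => topSeg_mono lk _ (Nat.sub_le_sub_right h _) hu)

lemma Lam_card {s d : ℕ} (h1 : (degM n d \ Nm hr a d).card ≤ s) (h2 : s ≤ (degM n d).card) :
    (Lam hr a s d).card = s := by
  classical
  have hN : Nm hr a d ⊆ degM n d := Finset.filter_subset _ _
  have hc := Finset.card_sdiff_add_card_eq_card hN
  have e : Lam hr a s d = (degM n d \ Nm hr a d) ∪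
    topSeg lk (Nm hr a d) (s - (degM n d \ Nm hr a d).card) := by
    ext u; rw [mem_Lam, Finset.mem_union, Finset.mem_sdiff]
  rw [e, Finset.card_union_of_disjoint, card_topSeg lk_inj _ _ (by omega)]
  · omega
  · rw [Finset.disjoint_left]
    intro u hu hu'
    exact (Finset.mem_sdiff.1 hu).2 ((topSeg_upSeg lk _ _).1 hu')

lemma not_Nm_of_le {d d' : ℕ} {u z : Fin n → ℕ} (hu : u ∈ degM n d) (hu' : u ∉ Nm hr a d)
    (hz : u ≤ z) : z ∉ Nm hr a d' := by
  intro h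
  refine hu' (Finset.mem_filter.2 ⟨hu, fun i => lt_of_le_of_lt (hz _) ((Finset.mem_filter.1 h).2 i)⟩)

lemma Lam_step (ha : ∀ i, 2 ≤ a i) (hmono : Monotone a) (M : ℕ → Finset (Fin n → ℕ))
    (hM2 : ∀ d, M d ⊆ degM n d)
    (hM3 : ∀ d, ∀ u ∈ M d, ∀ z ∈ degM n (d + 1), u ≤ z → z ∈ M (d + 1))
    (hM4 : ∀ d, degM n d \ Nm hr a d ⊆ M d) (d : ℕ) (u z : Fin n → ℕ)
    (hu : u ∈ Lam hr a (M d).card d) (hz : z ∈ degM n (d + 1)) (huz : u ≤ z) :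
    z ∈ Lam hr a (M (d + 1)).card (d + 1) := by
  classical
  have hud := Lam_subset hr a _ _ hu
  rw [mem_Lam] at hu ⊢
  by_cases hzN : z ∈ Nm hr a (d + 1)
  swap
  · exact Or.inl ⟨hz, hzN⟩
  right
  rcases hu with ⟨h1, h2⟩ | hu
  · exact absurd hzN (not_Nm_of_le hr a h1 h2 huz)
  obtain ⟨D, hD1, hD2⟩ : ∃ D, d + 1 ≤ D ∧ ∀ i, a i ≤ D := by
    refine ⟨d + 1 + ∑ i, a i, Nat.le_add_right _ _, fun i => ?_⟩
    have := Finset.single_le_sum (fun i _ => Nat.zero_le (a i)) (Finset.mem_univ i)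
    omega
  have e0 := mbox_bb hr a ha D d (by omega)
  have e1 := mbox_bb hr a ha D (d + 1) hD1
  have hcl := clements_lindstrom n (bb a n D) (bb_mono a hmono D hD2)
  have hcardM : ∀ d, (M d ∩ Nm hr a d).card = (M d).card - (degM n d \ Nm hr a d).card := by
    intro d
    have h1 : M d \ (degM n d \ Nm hr a d) = M d ∩ Nm hr a d := by
      ext w
      simp only [Finset.mem_sdiff, Finset.mem_inter]
      constructor
      · rintro ⟨hw1, hw2⟩
        refine ⟨hw1, ?_⟩
        by_contra hw3
        exact hw2 ⟨hM2 d hw1, hw3⟩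
      · rintro ⟨hw1, hw2⟩
        exact ⟨hw1, fun h => h.2 hw2⟩
    rw [← h1, Finset.card_sdiff_of_subset (hM4 d)]
  set s := (M d).card - (degM n d \ Nm hr a d).card with hs
  have hseg := topSeg_upSeg lk (Nm hr a d) s
  have hscard : (topSeg lk (Nm hr a d) s).card = s := by
    refine card_topSeg lk_inj _ _ ?_
    rw [hs, ← hcardM d]
    exact Finset.card_le_card Finset.inter_subset_right
  have hsub : shad (bb a n D) d (M d ∩ Nm hr a d) ⊆ M (d + 1) ∩ Nm hr a (d + 1) := by
    intro w hw
    obtain ⟨hw1, v, hv, hvw⟩ := mem_shad.1 hw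
    rw [e1] at hw1
    refine Finset.mem_inter.2 ⟨hM3 d v (Finset.mem_inter.1 hv).1 w
      (Finset.mem_filter.1 hw1).1 hvw, hw1⟩
  rw [← e0] at hseg
  have hcc := hcl d (M d ∩ Nm hr a d) _ (by rw [e0]; exact Finset.inter_subset_right) hseg
    (by rw [e0, hscard, hcardM d])
  have hseg' := shad_upSeg hseg
  have hle := hcc.trans (Finset.card_le_card hsub)
  rw [hcardM (d + 1)] at hle
  have hfin := hseg'.subset_topSeg lk hle
  rw [e1, e0] at hfin
  exact hfin (mem_shad.2 ⟨by rw [e1]; exact hzN, u, hu, huz⟩)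

lemma Lam_up (ha : ∀ i, 2 ≤ a i) (hmono : Monotone a) (M : ℕ → Finset (Fin n → ℕ))
    (hM2 : ∀ d, M d ⊆ degM n d)
    (hM3 : ∀ d, ∀ u ∈ M d, ∀ z ∈ degM n (d + 1), u ≤ z → z ∈ M (d + 1))
    (hM4 : ∀ d, degM n d \ Nm hr a d ⊆ M d) (e d : ℕ) (u z : Fin n → ℕ)
    (hu : u ∈ Lam hr a (M d).card d) (hz : z ∈ degM n (d + e)) (huz : u ≤ z) :
    z ∈ Lam hr a (M (d + e)).card (d + e) := by
  induction e generalizing d u with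
  | zero =>
    have h1 := mem_degM.1 (Lam_subset hr a _ _ hu)
    have h2 := mem_degM.1 hz
    have : u = z := eq_of_le_sum huz (by rw [h1, h2]; rfl)
    rw [← this]; exact hu
  | succ e ih =>
    have h1 := mem_degM.1 (Lam_subset hr a _ _ hu)
    have h2 := mem_degM.1 hz
    obtain ⟨m, hm1, hm2⟩ := exists_between_sum Finset.univ u z (fun i _ => huz i) (d + 1)
      (by omega) (by omega)
    have hm := Lam_step hr a ha hmono M hM2 hM3 hM4 d u m hu (mem_degM.2 hm2)
      (fun i => (hm1 i (Finset.mem_univ i)).1)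
    have := ih (d + 1) m hm (by rw [mem_degM, h2]; ring) (fun i => (hm1 i (Finset.mem_univ i)).2)
    rwa [show d + 1 + e = d + (e + 1) by ring] at this

end Comb

section LM
variable {K : Type} [Field K]

/-- functions as finitely supported functions -/
noncomputable def fs {n : ℕ} (u : Fin n → ℕ) : Fin n →₀ ℕ := Finsupp.equivFunOnFinite.symm u

lemma fs_apply {n : ℕ} (u : Fin n → ℕ) (i : Fin n) : fs u i = u i := rfl

lemma fs_coe {n : ℕ} (u : Fin n →₀ ℕ) : fs (u : Fin n → ℕ) = u := by ext; rfl

lemma fs_inj {n : ℕ} : Function.Injective (fs (n := n)) := Finsupp.equivFunOnFinite.symm.injective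

lemma degree_fs {n : ℕ} (u : Fin n → ℕ) : (fs u).degree = ∑ i, u i := by
  rw [Finsupp.degree_eq_sum]; rfl

noncomputable def LMF {n : ℕ} (J : Ideal (MvPolynomial (Fin n) K)) (d : ℕ) : Finset (Fin n → ℕ) :=
  open Classical in (degM n d).filter (fun u => ∃ f ∈ J, f.IsHomogeneous d ∧ f ≠ 0 ∧
    MonomialOrder.lex.degree f = fs u)

lemma mem_LMF {n : ℕ} {J : Ideal (MvPolynomial (Fin n) K)} {d : ℕ} {u : Fin n → ℕ} :
    u ∈ LMF J d ↔ u ∈ degM n d ∧ ∃ f ∈ J, f.IsHomogeneous d ∧ f ≠ 0 ∧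
    MonomialOrder.lex.degree f = fs u := by
  simp only [LMF, Finset.mem_filter]

lemma LMF_of {n : ℕ} {J : Ideal (MvPolynomial (Fin n) K)} {d : ℕ} {u : Fin n → ℕ}
    {f : MvPolynomial (Fin n) K} (hf : f ∈ J) (hd : f.IsHomogeneous d) (h0 : f ≠ 0)
    (hu : MonomialOrder.lex.degree f = fs u) : u ∈ LMF J d := by
  refine mem_LMF.2 ⟨mem_degM.2 ?_, f, hf, hd, h0, hu⟩
  have := hd.degree_eq_sum_deg_support (MonomialOrder.lex.degree_mem_support h0)
  rw [hu] at this
  change d = (fs u).degree at this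
  rw [degree_fs] at this
  exact this.symm

lemma LMF_up {n : ℕ} {J : Ideal (MvPolynomial (Fin n) K)} {d d' : ℕ} {u z : Fin n → ℕ}
    (hu : u ∈ LMF J d) (hz : z ∈ degM n d') (huz : u ≤ z) : z ∈ LMF J d' := by
  classical
  obtain ⟨hu1, f, hf, hd, h0, hfu⟩ := mem_LMF.1 hu
  rw [mem_degM] at hu1 hz
  have hm0 : monomial (fs (z - u)) (1 : K) ≠ 0 := by simp
  have hzu : (z - u) + u = z := tsub_add_cancel_of_le huz
  have hsum : ∑ i, (z - u) i + d = d' := by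
    rw [← hz, ← hu1, ← Finset.sum_add_distrib]
    exact Finset.sum_congr rfl (fun i _ => congrFun hzu i)
  refine LMF_of (f := monomial (fs (z - u)) 1 * f) (Ideal.mul_mem_left _ _ hf) ?_
    (mul_ne_zero hm0 h0) ?_
  · rw [← hsum]
    exact (isHomogeneous_monomial _ (degree_fs _)).mul hd
  · rw [MonomialOrder.degree_mul hm0 h0, MonomialOrder.degree_monomial, if_neg one_ne_zero, hfu]
    ext i
    exact congrFun hzu i

lemma LMF_pow {n r : ℕ} (hr : r ≤ n) (a : Fin r → ℕ) {J : Ideal (MvPolynomial (Fin n) K)}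
    (hJ : ∀ i : Fin r, (X (Fin.castLE hr i) : MvPolynomial (Fin n) K) ^ a i ∈ J) (d : ℕ) :
    degM n d \ Nm hr a d ⊆ LMF J d := by
  classical
  intro u hu
  rw [Finset.mem_sdiff] at hu
  obtain ⟨i, hi⟩ : ∃ i : Fin r, a i ≤ u (Fin.castLE hr i) := by
    by_contra h
    push Not at h
    exact hu.2 (Finset.mem_filter.2 ⟨hu.1, h⟩)
  have h1 : (Pi.single (Fin.castLE hr i) (a i) : Fin n → ℕ) ∈ LMF J (a i) := by
    refine LMF_of (hJ i) (isHomogeneous_X_pow _ _) (pow_ne_zero _ (X_ne_zero _)) ?_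
    rw [X_pow_eq_monomial, MonomialOrder.degree_monomial, if_neg one_ne_zero]
    ext j
    rw [fs_apply, Finsupp.single_apply, Pi.single_apply]
    simp only [eq_comm]
  refine LMF_up h1 hu.1 ?_
  intro j
  by_cases hj : j = Fin.castLE hr i
  · rw [hj, Pi.single_eq_same]; exact hi
  · rw [Pi.single_eq_of_ne hj]; exact Nat.zero_le _

lemma LMF_card {n : ℕ} (J : Ideal (MvPolynomial (Fin n) K)) (d : ℕ) :
    (LMF J d).card = hilb J d := by
  classical
  apply le_antisymm
  · have hch : ∀ u : LMF J d, ∃ f : ↥(Submodule.restrictScalars K J ⊓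
        homogeneousSubmodule (Fin n) K d), (f : MvPolynomial (Fin n) K) ≠ 0 ∧
        MonomialOrder.lex.degree (f : MvPolynomial (Fin n) K) = fs u.1 := by
      intro u
      obtain ⟨_, f, hf, hd, h0, hfu⟩ := mem_LMF.1 u.2
      exact ⟨⟨f, hf, hd⟩, h0, hfu⟩
    choose F hF0 hFu using hch
    have hli : LinearIndependent K F := by
      rw [linearIndependent_iff']
      intro s c hc
      by_contra hcon
      push Not at hcon
      obtain ⟨i, his, hi⟩ := hcon
      obtain ⟨t, ht, htmax⟩ := Finset.exists_max_image (s.filter (fun i => c i ≠ 0))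
        (fun u => MonomialOrder.lex.toSyn (fs u.1)) ⟨i, Finset.mem_filter.2 ⟨his, hi⟩⟩
      rw [Finset.mem_filter] at ht
      have hc2 := congrArg (fun v : ↥(Submodule.restrictScalars K J ⊓
        homogeneousSubmodule (Fin n) K d) => coeff (fs t.1) (v : MvPolynomial (Fin n) K)) hc
      simp only [Submodule.coe_sum, Submodule.coe_smul, coeff_sum, coeff_smul,
        ZeroMemClass.coe_zero, coeff_zero] at hc2
      rw [Finset.sum_eq_single_of_mem t ht.1] at hc2
      · have h3 : coeff (fs t.1) (F t : MvPolynomial (Fin n) K) ≠ 0 := by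
          rw [← hFu t]
          exact MonomialOrder.lex.coeff_degree_ne_zero_iff.2 (hF0 t)
        exact (mul_ne_zero ht.2 h3) hc2
      · intro j hj hjt
        by_cases hcj : c j = 0
        · rw [hcj, zero_smul]
        · have h4 := htmax j (Finset.mem_filter.2 ⟨hj, hcj⟩)
          have h5 : MonomialOrder.lex.toSyn (fs j.1) < MonomialOrder.lex.toSyn (fs t.1) := by
            refine lt_of_le_of_ne h4 (fun h => hjt ?_)
            exact Subtype.ext (fs_inj (MonomialOrder.lex.toSyn.injective h))
          rw [← hFu j] at h5
          rw [MonomialOrder.lex.coeff_eq_zero_of_lt h5, smul_zero]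
    have := hli.fintype_card_le_finrank
    rw [Fintype.card_coe] at this
    exact this
  · let φ : ↥(Submodule.restrictScalars K J ⊓ homogeneousSubmodule (Fin n) K d) →ₗ[K]
        (LMF J d → K) :=
      { toFun := fun v u => coeff (fs u.1) (v : MvPolynomial (Fin n) K)
        map_add' := fun v w => by ext u; simp
        map_smul' := fun c w => by ext u; simp }
    have hφ : Function.Injective φ := by
      rw [injective_iff_map_eq_zero]
      intro v hv
      by_contra hv0
      have hv0' : (v : MvPolynomial (Fin n) K) ≠ 0 := fun h => hv0 (Subtype.ext h)
      have hmem : ((MonomialOrder.lex.degree (v : MvPolynomial (Fin n) K) : Fin n →₀ ℕ) :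
          Fin n → ℕ) ∈ LMF J d :=
        LMF_of v.2.1 v.2.2 hv0' (fs_coe _).symm
      have := congrFun hv ⟨_, hmem⟩
      change coeff (fs _) (v : MvPolynomial (Fin n) K) = 0 at this
      rw [fs_coe] at this
      exact MonomialOrder.lex.coeff_degree_ne_zero_iff.2 hv0' this
    have := LinearMap.finrank_le_finrank_of_injective hφ
    rw [Module.finrank_fintype_fun_eq_card, Fintype.card_coe] at this
    exact this

lemma hilb_restrict {n : ℕ} (T : Set (Fin n →₀ ℕ)) (hT : IsUpperSet T) (d : ℕ) :
    hilb (restrictSupportIdeal (R := K) T hT) d = Nat.card ↥{u | u ∈ T ∧ u.degree = d} := by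
  have h : Submodule.restrictScalars K (restrictSupportIdeal (R := K) T hT) ⊓
      homogeneousSubmodule (Fin n) K d = restrictSupport K {u | u ∈ T ∧ u.degree = d} := by
    ext f
    rw [Submodule.mem_inf, restrictScalars_restrictSupportIdeal, mem_restrictSupport_iff,
      mem_restrictSupport_iff, mem_homogeneousSubmodule]
    constructor
    · rintro ⟨h1, h2⟩ u hu
      exact ⟨h1 hu, (h2.degree_eq_sum_deg_support hu).symm⟩
    · intro h
      refine ⟨fun u hu => (h hu).1, ?_⟩
      intro u hu
      have := (h (mem_support_iff.2 hu)).2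
      rw [← this, Finsupp.degree_eq_weight_one]
      rfl
  rw [hilb, h, Module.finrank_eq_nat_card_basis (basisRestrictSupport K _)]

end LM

section Final
variable {K : Type} [Field K]

/-- monomials in one more variable whose slices are given by `L` -/
def slT {n : ℕ} (L : ℕ → ℕ → Finset (Fin n → ℕ)) : Set (Fin (n + 1) →₀ ℕ) :=
  {u | (fun i : Fin n => u i.castSucc) ∈ L (u (Fin.last n)) (∑ i : Fin n, u i.castSucc)}

lemma slT_card {n : ℕ} (L : ℕ → ℕ → Finset (Fin n → ℕ)) (hL : ∀ j e, L j e ⊆ degM n e) (d : ℕ) :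
    Nat.card ↥{u | u ∈ slT L ∧ u.degree = d} =
      ∑ j ∈ Finset.range (d + 1), (L j (d - j)).card := by
  classical
  rw [← Finset.card_sigma]
  have hcard : ((Finset.range (d + 1)).sigma (fun j => L j (d - j))).card =
      Nat.card ↥((Finset.range (d + 1)).sigma (fun j => L j (d - j))) := by
    rw [Nat.card_eq_fintype_card, Fintype.card_coe]
  rw [hcard]
  symm
  have hdeg : ∀ u : Fin (n + 1) →₀ ℕ, u.degree = ∑ i : Fin n, u i.castSucc + u (Fin.last n) := by
    intro u
    rw [Finsupp.degree_eq_sum, Fin.sum_univ_castSucc]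
  refine Nat.card_congr (Equiv.ofBijective (fun x => ⟨fs (Fin.snoc x.1.2 x.1.1), ?_⟩) ⟨?_, ?_⟩)
  · obtain ⟨⟨j, w⟩, hx⟩ := x
    have hx := Finset.mem_sigma.1 hx
    simp only [Finset.mem_range] at hx
    have hw := mem_degM.1 (hL _ _ hx.2)
    have e1 : ∀ i : Fin n, fs (Fin.snoc w j : Fin (n + 1) → ℕ) i.castSucc = w i := fun i => by
      rw [fs_apply, Fin.snoc_castSucc]
    have e2 : fs (Fin.snoc w j : Fin (n + 1) → ℕ) (Fin.last n) = j := by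
      rw [fs_apply, Fin.snoc_last]
    constructor
    · change (fun i : Fin n => fs (Fin.snoc w j : Fin (n + 1) → ℕ) i.castSucc) ∈ L _ _
      simp only [e1, e2]
      rw [hw]
      exact hx.2
    · rw [hdeg]
      simp only [e1, e2]
      rw [hw]
      omega
  · rintro ⟨⟨j, w⟩, hx⟩ ⟨⟨j', w'⟩, hx'⟩ h
    have h1 := fs_inj (congrArg Subtype.val h)
    have h2 : j = j' := by simpa using congrFun h1 (Fin.last n)
    have h3 : w = w' := by
      funext i
      simpa using congrFun h1 i.castSucc
    subst h2 h3
    rfl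
  · rintro ⟨u, hu1, hu2⟩
    have hu2 : u.degree = d := hu2
    rw [hdeg] at hu2
    refine ⟨⟨⟨u (Fin.last n), fun i => u i.castSucc⟩, ?_⟩, ?_⟩
    · refine Finset.mem_sigma.2 ⟨?_, ?_⟩
      · rw [Finset.mem_range]; change u (Fin.last n) < d + 1; omega
      · have hu1 : (fun i : Fin n => u i.castSucc) ∈
          L (u (Fin.last n)) (∑ i : Fin n, u i.castSucc) := hu1
        rwa [show ∑ i : Fin n, u i.castSucc = d - u (Fin.last n) by omega] at hu1
    · refine Subtype.ext ?_
      ext i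
      rw [fs_apply]
      refine Fin.lastCases ?_ (fun i => ?_) i
      · simp
      · simp

def extN {S : Type*} [CommRing S] {r : ℕ} (f : Fin r → S) : ℕ → S :=
  fun j => if h : j < r then f ⟨j, h⟩ else 0

lemma extN_val {S : Type*} [CommRing S] {r : ℕ} (f : Fin r → S) (i : Fin r) :
    extN f i = f i := by simp [extN]

lemma span_extN {S : Type*} [CommRing S] {r : ℕ} (f : Fin r → S) (i : Fin r) :
    Ideal.span (f '' {j : Fin r | j < i}) = Fm (extN f) i := by
  rw [Fm]
  congr 1
  ext x
  constructor
  · rintro ⟨j, hj, rfl⟩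
    exact ⟨j, hj, extN_val f j⟩
  · rintro ⟨j, hj, rfl⟩
    have hj : j < (i : ℕ) := hj
    exact ⟨⟨j, hj.trans i.2⟩, hj, (extN_val f ⟨j, hj.trans i.2⟩).symm⟩

lemma wreg_extN {S : Type*} [CommRing S] {r : ℕ} (f : Fin r → S) :
    WReg (extN f) r ↔ ∀ i : Fin r, ∀ g, f i * g ∈ Ideal.span (f '' {j : Fin r | j < i}) →
      g ∈ Ideal.span (f '' {j : Fin r | j < i}) := by
  constructor
  · intro h i g
    rw [span_extN, ← extN_val f i]
    exact h i i.2 g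
  · intro h i hi g
    have := h ⟨i, hi⟩ g
    rw [span_extN, ← extN_val f ⟨i, hi⟩] at this
    exact this

lemma slT_upper {n r : ℕ} (hr : r ≤ n) (a : Fin r → ℕ) (ha : ∀ i, 2 ≤ a i) (hmono : Monotone a)
    (J : ℕ → Ideal (MvPolynomial (Fin n) K))
    (hJ : ∀ j, ∀ i : Fin r, (X (Fin.castLE hr i) : MvPolynomial (Fin n) K) ^ a i ∈ J j)
    (hinc : ∀ i j, i ≤ j → ∀ d, hilb (J i) d ≤ hilb (J j) d) :
    IsUpperSet (slT (fun j e => Lam hr a (hilb (J j) e) e)) := by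
  intro u z huz hu
  have hu : (fun i : Fin n => u i.castSucc) ∈ Lam hr a
    (hilb (J (u (Fin.last n))) (∑ i : Fin n, u i.castSucc)) (∑ i : Fin n, u i.castSucc) := hu
  have hle : ∑ i : Fin n, u i.castSucc ≤ ∑ i : Fin n, z i.castSucc :=
    Finset.sum_le_sum (fun i _ => huz _)
  obtain ⟨e, he⟩ := Nat.exists_eq_add_of_le hle
  rw [← LMF_card] at hu
  have h := Lam_up hr a ha hmono (LMF (J (u (Fin.last n)))) (fun d w hw => (mem_LMF.1 hw).1)
    (fun d w hw y hy hwy => LMF_up hw hy hwy) (LMF_pow hr a (hJ _)) e _ _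
    (fun i : Fin n => z i.castSucc) hu (by rw [mem_degM, he]) (fun i => huz _)
  rw [← he, LMF_card] at h
  exact Lam_mono hr a (hinc _ _ (huz _) _) _ h

end Final

/-- the inductive step: `EGH_{n,a,r}` implies `EGH_{n+1,a,r}`. -/
theorem stmt13 {K : Type} [Field K] [Infinite K] {n r : ℕ} (hr : r ≤ n)
    (a : Fin r → ℕ) (ha2 : ∀ i, 2 ≤ a i) (hmono : Monotone a)
    (hEGH : EGHnr K n r hr a) :
    EGHnr K (n + 1) r (hr.trans n.le_succ) a := by
  classical
  intro I hI ⟨f, hreg, hdeg, hfI⟩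
  have hw : WReg (extN f) r := (wreg_extN f).2 hreg.2
  obtain ⟨c, hc⟩ := exists_regular_linear (fun i : Fin (r + 1) => Fm (extN f) i)
    (fun i => depthPos_Fm i _ _ (fun j hj => hw j (by omega)) (by omega))
  have hg : ∀ i ≤ r, ∀ u, linForm c * u ∈ Fm (extN f) i → u ∈ Fm (extN f) i :=
    fun i hi u => hc ⟨i, by omega⟩ u
  have hg0 : linForm c ≠ 0 := by
    intro h
    have := hg 0 (Nat.zero_le _) 1 (by rw [h, zero_mul]; exact zero_mem _)
    rw [Fm_zero, Submodule.mem_bot] at this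
    exact one_ne_zero this
  obtain ⟨π, hs, hk, hh, -⟩ := exists_proj c hg0
  set g := linForm c with hgdef
  have hgh : g.IsHomogeneous 1 :=
    Submodule.sum_mem (homogeneousSubmodule (Fin (n + 1)) K 1)
      (fun k _ => Submodule.smul_mem _ _ (isHomogeneous_X _ _))
  have hp : IsProj π g := ⟨hs, hk, hh, hgh, hg0⟩
  have hw' := wreg_proj π.toRingHom hs hk (extN f) r hw hg
  have hext : (fun j => π.toRingHom (extN f j)) = extN (fun i => π (f i)) := by
    funext j
    unfold extN
    split_ifs
    · rfl
    · exact map_zero _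
  rw [hext, wreg_extN] at hw'
  have hdeg' : ∀ i, (π (f i)).IsHomogeneous (a i) := fun i => hh _ _ (hdeg i)
  have hproper : Ideal.span (Set.range (fun i => π (f i))) ≠ ⊤ := by
    intro htop
    have hle : Ideal.span (Set.range (fun i => π (f i))) ≤
        RingHom.ker (constantCoeff (R := K) (σ := Fin n)) := by
      rw [Ideal.span_le]
      rintro _ ⟨i, rfl⟩
      refine (hdeg' i).coeff_eq_zero ?_
      have := ha2 i
      simp only [map_zero]
      omega
    rw [htop] at hle
    have : (1 : MvPolynomial (Fin n) K) ∈ RingHom.ker (constantCoeff (R := K) (σ := Fin n)) :=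
      hle trivial
    rw [RingHom.mem_ker, map_one] at this
    exact one_ne_zero this
  have hex := fun j => hEGH ((cgp g I j).map π) (hp.homog_map (homog_cgp hgh hI j))
    ⟨fun i => π (f i), ⟨hproper, hw'⟩, hdeg', fun i =>
      Ideal.mem_map_of_mem π (mem_cgp.2 (Ideal.mul_mem_left _ _ (hfI i)))⟩
  choose J hJ1 hJ2 using hex
  have hinc : ∀ i j, i ≤ j → ∀ d, hilb (J i) d ≤ hilb (J j) d := by
    intro i j hij d
    rw [← hJ2, ← hJ2]
    exact hilb_mono (Ideal.map_mono (cgp_mono g I hij)) d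
  have hT := slT_upper hr a ha2 hmono J hJ1 hinc
  refine ⟨restrictSupportIdeal (R := K) _ hT, ?_, ?_⟩
  · intro i
    rw [X_pow_eq_monomial]
    change monomial _ _ ∈ restrictSupport K _
    rw [monomial_mem_restrictSupport]
    left
    refine (mem_Lam hr a).2 (Or.inl ⟨mem_degM.2 rfl, ?_⟩)
    intro h
    have := (Finset.mem_filter.1 h).2 i
    have e : (Fin.castLE hr i).castSucc = Fin.castLE (hr.trans n.le_succ) i := by ext; simp
    beta_reduce at this
    rw [e, Finsupp.single_eq_same] at this
    exact lt_irrefl _ this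
  · intro d
    rw [hilb_restrict, slT_card _ (fun j e => Lam_subset hr a _ _), hp.hilb_sum hI]
    refine Finset.sum_congr rfl (fun j _ => ?_)
    rw [hJ2, Lam_card]
    · rw [← LMF_card]
      exact Finset.card_le_card (LMF_pow hr a (hJ1 j) _)
    · rw [← LMF_card]
      exact Finset.card_le_card (fun w hw => (mem_LMF.1 hw).1)
end

section
/- For any Hilbert function of a homogeneous ideal of k[x_1,...,x_n] containing the monomial ideal (x_1^{a_1},...,x_k^{a_k}) (k ≤ n), the unique lexicographic-type construction: there is a monomial ideal containing x_1^{a_1},...,x_k^{a_k} with this Hilbert function whose standard monomials in each degree d are the H(S/I,d) lexicographically smallest monomials of degree d not divisible by any x_i^{a_i}, i ≤ k. -/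
open MvPolynomial

namespace CL
open Finset
open scoped Classical

theorem lex_lt_iff {n : ℕ} (y z : Fin n → ℕ) :
    toLex y < toLex z ↔ ∃ i, (∀ j, j < i → y j = z j) ∧ y i < z i := Iff.rfl

/-- degree-`d` monomials of the box. -/
def Box {n : ℕ} (a : Fin n → ℕ) (d : ℕ) : Finset (Fin n → ℕ) :=
  (Fintype.piFinset fun i => range (a i)).filter (fun w => ∑ i, w i = d)

theorem mem_Box {n : ℕ} {a : Fin n → ℕ} {d : ℕ} {w : Fin n → ℕ} :
    w ∈ Box a d ↔ (∀ i, w i < a i) ∧ ∑ i, w i = d := by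
  simp [Box]

/-- upper shadow. -/
noncomputable def up {n : ℕ} (a : Fin n → ℕ) (d : ℕ) (A : Finset (Fin n → ℕ)) : Finset (Fin n → ℕ) :=
  (Box a (d+1)).filter (fun w => ∃ v ∈ A, v ≤ w)

theorem mem_up {n : ℕ} {a : Fin n → ℕ} {d : ℕ} {A : Finset (Fin n → ℕ)} {w : Fin n → ℕ} :
    w ∈ up a d A ↔ w ∈ Box a (d+1) ∧ ∃ v ∈ A, v ≤ w := by
  simp [up]

/-- lex segments. -/
def Seg {n : ℕ} (X S : Finset (Fin n → ℕ)) : Prop :=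
  S ⊆ X ∧ ∀ v ∈ S, ∀ u ∈ X, toLex v < toLex u → u ∈ S

theorem Seg.comparable {n : ℕ} {X S T : Finset (Fin n → ℕ)} (hS : Seg X S) (hT : Seg X T) 
    (h : #S ≤ #T) : S ⊆ T := by
  by_contra hne
  rw [Finset.not_subset] at hne
  obtain ⟨s, hs, hsT⟩ := hne
  have : T ⊂ S := by
    rw [Finset.ssubset_iff_of_subset]
    · exact ⟨s, hs, hsT⟩
    · intro t ht
      rcases lt_trichotomy (toLex s) (toLex t) with h1 | h1 | h1
      · exact hS.2 s hs t (hT.1 ht) h1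
      · have : s = t := toLex.injective h1
        exact this ▸ hs
      · exact absurd (hT.2 t ht s (hS.1 hs) h1) hsT
  have := Finset.card_lt_card this
  omega

theorem Seg.eq {n : ℕ} {X S T : Finset (Fin n → ℕ)} (hS : Seg X S) (hT : Seg X T) 
    (h : #S = #T) : S = T :=
  (hS.comparable hT h.le).antisymm (hT.comparable hS h.ge)

theorem exists_seg {n : ℕ} (X : Finset (Fin n → ℕ)) (c : ℕ) (hc : c ≤ #X) :
    ∃ S, Seg X S ∧ #S = c := by
  induction c with
  | zero => exact ⟨∅, ⟨by simp, by simp⟩, rfl⟩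
  | succ c ih =>
    obtain ⟨S, hS, hc'⟩ := ih (by omega)
    have hne : (X \ S).Nonempty := by
      rw [← Finset.card_pos, Finset.card_sdiff_of_subset hS.1]; omega
    obtain ⟨m, hm, hmax⟩ := Finset.exists_max_image (X \ S) toLex hne
    rw [mem_sdiff] at hm
    refine ⟨insert m S, ⟨?_, ?_⟩, by rw [card_insert_of_notMem hm.2, hc']⟩
    · exact Finset.insert_subset hm.1 hS.1
    · intro v hv u hu huv
      by_contra hcon
      rw [mem_insert, not_or] at hcon
      rw [mem_insert] at hv
      rcases hv with rfl | hv
      · exact absurd (hmax u (mem_sdiff.2 ⟨hu, hcon.2⟩)) (not_le.2 huv)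
      · exact hcon.2 (hS.2 v hv u hu huv)

/-- the top `c` elements. -/
noncomputable def top {n : ℕ} (X : Finset (Fin n → ℕ)) (c : ℕ) : Finset (Fin n → ℕ) :=
  X.filter (fun w => #(X.filter (fun y => toLex w < toLex y)) < c)

theorem mem_top {n : ℕ} {X : Finset (Fin n → ℕ)} {c : ℕ} {w : Fin n → ℕ} :
    w ∈ top X c ↔ w ∈ X ∧ #(X.filter (fun y => toLex w < toLex y)) < c := by
  simp [top]

theorem top_eq {n : ℕ} {X S : Finset (Fin n → ℕ)} (hS : Seg X S) : top X #S = S := by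
  ext w
  rw [mem_top]
  constructor
  · rintro ⟨hw, h⟩
    by_contra hwS
    refine absurd (Finset.card_le_card ?_) (not_le.2 h)
    intro s hs
    rw [mem_filter]
    refine ⟨hS.1 hs, ?_⟩
    rcases lt_trichotomy (toLex w) (toLex s) with h1 | h1 | h1
    · exact h1
    · exact absurd (toLex.injective h1 ▸ hs) hwS
    · exact absurd (hS.2 s hs w hw h1) hwS
  · intro hw
    refine ⟨hS.1 hw, Finset.card_lt_card ?_⟩
    rw [Finset.ssubset_iff_of_subset]
    · exact ⟨w, hw, fun h => lt_irrefl _ (mem_filter.1 h).2⟩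
    · intro y hy
      rw [mem_filter] at hy
      exact hS.2 w hw y hy.1 hy.2

theorem top_seg {n : ℕ} (X : Finset (Fin n → ℕ)) (c : ℕ) (hc : c ≤ #X) : Seg X (top X c) := by
  obtain ⟨S, hS, rfl⟩ := exists_seg X c hc
  rwa [top_eq hS]

theorem top_card {n : ℕ} (X : Finset (Fin n → ℕ)) (c : ℕ) (hc : c ≤ #X) : #(top X c) = c := by
  obtain ⟨S, hS, rfl⟩ := exists_seg X c hc
  rw [top_eq hS]

theorem cover {n : ℕ} {v w : Fin n → ℕ} (h : v ≤ w) (hd : ∑ i, w i = ∑ i, v i + 1) :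
    ∃ j, w = v + Pi.single j 1 := by
  have h1 : ∃ j, v j < w j := by
    by_contra hcon
    push Not at hcon
    have := Finset.sum_le_sum (fun i (_ : i ∈ univ) => hcon i)
    omega
  obtain ⟨j, hj⟩ := h1
  refine ⟨j, ?_⟩
  have hle : v + Pi.single j 1 ≤ w := by
    intro i
    by_cases hi : i = j
    · subst hi; simp; omega
    · simp [hi, h i]
  have hs : ∑ i, (v + Pi.single j 1 : Fin n → ℕ) i = ∑ i, w i := by
    simp [Finset.sum_add_distrib, hd]
  have := (Finset.sum_eq_sum_iff_of_le (fun i (_ : i ∈ univ) => hle i)).1 hs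
  funext i
  exact (this i (mem_univ i)).symm

theorem sum_single {n : ℕ} (v : Fin n → ℕ) (j : Fin n) :
    ∑ i, (v + Pi.single j 1 : Fin n → ℕ) i = ∑ i, v i + 1 := by
  simp [Finset.sum_add_distrib]

theorem le_single {n : ℕ} (v : Fin n → ℕ) (j : Fin n) :
    v ≤ v + Pi.single j 1 := by
  intro i; simp

theorem exists_sub {n : ℕ} (v : Fin n → ℕ) (j : Fin n) (hj : 0 < v j) :
    ∃ y : Fin n → ℕ, v = y + Pi.single j 1 := by
  refine ⟨v - Pi.single j 1, ?_⟩
  funext i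
  by_cases hi : i = j
  · subst hi; simp; omega
  · simp [hi]

theorem lex_swap {n : ℕ} {y z : Fin n → ℕ} {i j : Fin n} (hij : i < j)
    (h : z + Pi.single j 1 = y + Pi.single i 1) : toLex y < toLex z := by
  rw [lex_lt_iff]
  refine ⟨i, fun k hk => ?_, ?_⟩
  · have := congrFun h k
    simp [hk.ne, (hk.trans hij).ne] at this
    exact this.symm
  · have := congrFun h i
    simp [hij.ne] at this
    omega

theorem seg_up {n : ℕ} {a : Fin n → ℕ} {d : ℕ} {S : Finset (Fin n → ℕ)} 
    (hS : Seg (Box a d) S) : Seg (Box a (d+1)) (up a d S) := by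
  refine ⟨Finset.filter_subset _ _, ?_⟩
  intro w hw w' hw' hlt
  rw [mem_up] at hw ⊢
  refine ⟨hw', ?_⟩
  obtain ⟨hwB, y, hy, hyw⟩ := hw
  rw [lex_lt_iff] at hlt
  obtain ⟨i, hpre, hi⟩ := hlt
  -- largest index with positive value
  obtain ⟨k, hk, hkmax⟩ := Finset.exists_max_image (univ.filter (fun k => 0 < w' k)) id
    ⟨i, by simp; omega⟩
  simp only [mem_filter, mem_univ, true_and, id] at hk hkmax
  have hik : i ≤ k := hkmax i (by omega)
  obtain ⟨y', rfl⟩ := exists_sub w' k hk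
  refine ⟨y', ?_, le_single _ _⟩
  have hyB := mem_Box.1 (hS.1 hy)
  have hy'B : y' ∈ Box a d := by
    rw [mem_Box, sum_single] at hw'
    rw [mem_Box]
    exact ⟨fun j => lt_of_le_of_lt (le_single y' k j) (hw'.1 j), by omega⟩
  have hle : ∀ j, j ≤ i → y j ≤ y' j := by
    intro j hj
    rcases hj.lt_or_eq with h | rfl
    · have h1 := hpre j h
      have h2 : j ≠ k := (h.trans_le hik).ne
      simp [h2] at h1
      have : y j ≤ w j := hyw j
      omega
    · have : y j ≤ w j := hyw j
      by_cases h2 : j = k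
      · subst h2; simp at hi; omega
      · simp [h2] at hi; omega
  rcases lt_trichotomy (toLex y) (toLex y') with h | h | h
  · exact hS.2 y hy y' hy'B h
  · exact toLex.injective h ▸ hy
  · exfalso
    obtain ⟨t, ht1, ht2⟩ := (lex_lt_iff _ _).1 h
    have hti : i < t := by
      by_contra hcon
      have := hle t (not_lt.1 hcon)
      omega
    have hik' : i = k := by
      by_contra hne
      have h3 := ht1 i hti
      simp [hne] at hi
      have : y i ≤ w i := hyw i
      omega
    subst hik'
    have hz : ∀ j, i < j → y' j = 0 := by
      intro j hj
      by_contra hne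
      have := hkmax j (by simp; omega)
      exact absurd this (not_le.2 hj)
    have : ∑ j, y' j < ∑ j, y j := by
      apply Finset.sum_lt_sum
      · intro j _
        by_cases hj : j ≤ i
        · exact (ht1 j (hj.trans_lt hti)).le
        · rw [hz j (not_le.1 hj)]; omega
      · exact ⟨t, mem_univ _, ht2⟩
    have := (mem_Box.1 hy'B).2
    omega

/-- fibre -/
def fib {n : ℕ} (i : Fin n) (x : ℕ) (A : Finset (Fin n → ℕ)) : Finset (Fin n → ℕ) :=
  A.filter (fun w => w i = x)

theorem mem_fib {n : ℕ} {i : Fin n} {x : ℕ} {A : Finset (Fin n → ℕ)} {w : Fin n → ℕ} :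
    w ∈ fib i x A ↔ w ∈ A ∧ w i = x := by simp [fib]

/-- compression -/
noncomputable def comp {n : ℕ} (a : Fin n → ℕ) (d : ℕ) (i : Fin n) (A : Finset (Fin n → ℕ)) :
    Finset (Fin n → ℕ) :=
  (Box a d).filter (fun w => w ∈ top (fib i (w i) (Box a d)) #(fib i (w i) A))

theorem fib_mono {n : ℕ} {i : Fin n} {x : ℕ} {A B : Finset (Fin n → ℕ)} (h : A ⊆ B) :
    fib i x A ⊆ fib i x B := Finset.filter_subset_filter _ h

theorem fib_comp {n : ℕ} (a : Fin n → ℕ) (d : ℕ) (i : Fin n) (A : Finset (Fin n → ℕ)) (x : ℕ) :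
    fib i x (comp a d i A) = top (fib i x (Box a d)) #(fib i x A) := by
  ext w
  rw [mem_fib, comp, mem_filter]
  constructor
  · rintro ⟨⟨h1, h2⟩, rfl⟩; exact h2
  · intro h
    have h3 := mem_fib.1 (mem_top.1 h).1
    obtain ⟨h3, rfl⟩ := h3
    exact ⟨⟨h3, h⟩, rfl⟩

theorem comp_card {n : ℕ} (a : Fin n → ℕ) (d : ℕ) (i : Fin n) (A : Finset (Fin n → ℕ)) 
    (hA : A ⊆ Box a d) : #(comp a d i A) = #A := by
  rw [Finset.card_eq_sum_card_fiberwise (f := fun w => w i) (t := range (a i)) (s := A),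
    Finset.card_eq_sum_card_fiberwise (f := fun w => w i) (t := range (a i)) (s := comp a d i A)]
  · refine Finset.sum_congr rfl fun x _ => ?_
    have h := fib_comp a d i A x
    have h2 := top_card (fib i x (Box a d)) #(fib i x A) (card_le_card (fib_mono hA))
    rw [← h] at h2
    exact h2
  · intro w hw
    have := (mem_Box.1 ((Finset.filter_subset _ _) hw)).1 i
    simpa using this
  · intro w hw
    have := (mem_Box.1 (hA hw)).1 i
    simpa using this

/-- The statement. -/
def Main (n : ℕ) : Prop := ∀ (a : Fin n → ℕ), Monotone a → ∀ (d : ℕ) (A S : Finset (Fin n → ℕ)),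
  A ⊆ Box a d → Seg (Box a d) S → #S = #A → #(up a d S) ≤ #(up a d A)


/-- insert a coordinate -/
def ins {n : ℕ} (i : Fin (n+1)) (x : ℕ) (v : Fin n → ℕ) : Fin (n+1) → ℕ :=
  Fin.insertNth (α := fun _ => ℕ) i x v

@[simp] theorem ins_same {n : ℕ} (i : Fin (n+1)) (x : ℕ) (v : Fin n → ℕ) : ins i x v i = x := by
  simp [ins]

@[simp] theorem ins_succAbove {n : ℕ} (i : Fin (n+1)) (x : ℕ) (v : Fin n → ℕ) (k : Fin n) :
    ins i x v (i.succAbove k) = v k := by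
  simp [ins]

theorem eq_ins {n : ℕ} (i : Fin (n+1)) (w : Fin (n+1) → ℕ) :
    w = ins i (w i) (fun k => w (i.succAbove k)) := by
  funext j
  rcases Fin.eq_self_or_eq_succAbove i j with rfl | ⟨k, rfl⟩ <;> simp

theorem ins_inj {n : ℕ} (i : Fin (n+1)) (x : ℕ) {v v' : Fin n → ℕ} (h : ins i x v = ins i x v') :
    v = v' := by
  funext k
  have := congrFun h (i.succAbove k)
  simpa using this

theorem ins_le {n : ℕ} (i : Fin (n+1)) (x : ℕ) (v v' : Fin n → ℕ) :
    ins i x v ≤ ins i x v' ↔ v ≤ v' := by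
  constructor
  · intro h k
    have := h (i.succAbove k)
    simpa using this
  · intro h j
    rcases Fin.eq_self_or_eq_succAbove i j with rfl | ⟨k, rfl⟩
    · simp
    · simpa using h k

theorem ins_lex {n : ℕ} (i : Fin (n+1)) (x : ℕ) (v v' : Fin n → ℕ) :
    toLex (ins i x v) < toLex (ins i x v') ↔ toLex v < toLex v' := by
  rw [lex_lt_iff, lex_lt_iff]
  constructor
  · rintro ⟨t, h1, h2⟩
    rcases Fin.eq_self_or_eq_succAbove i t with rfl | ⟨k, rfl⟩
    · simp at h2
    · refine ⟨k, fun j hj => ?_, by simpa using h2⟩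
      have := h1 (i.succAbove j) (Fin.strictMono_succAbove i hj)
      simpa using this
  · rintro ⟨k, h1, h2⟩
    refine ⟨i.succAbove k, fun j hj => ?_, by simpa using h2⟩
    rcases Fin.eq_self_or_eq_succAbove i j with rfl | ⟨j, rfl⟩
    · simp
    · simpa using h1 j ((Fin.strictMono_succAbove i).lt_iff_lt.1 hj)

theorem ins_mem_Box {n : ℕ} (a : Fin (n+1) → ℕ) (i : Fin (n+1)) (x e : ℕ) (v : Fin n → ℕ) :
    ins i x v ∈ Box a (x + e) ↔ x < a i ∧ v ∈ Box (fun k => a (i.succAbove k)) e := by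
  rw [mem_Box, mem_Box, Fin.sum_univ_succAbove _ i]
  simp only [ins_same, ins_succAbove]
  constructor
  · rintro ⟨h1, h2⟩
    refine ⟨by simpa using h1 i, fun k => by simpa using h1 (i.succAbove k), by omega⟩
  · rintro ⟨h0, h1, h2⟩
    refine ⟨fun j => ?_, by omega⟩
    rcases Fin.eq_self_or_eq_succAbove i j with rfl | ⟨k, rfl⟩
    · simpa using h0
    · simpa using h1 k

/-- slice -/
noncomputable def slice {n : ℕ} (i : Fin (n+1)) (x : ℕ) (A : Finset (Fin (n+1) → ℕ)) :
    Finset (Fin n → ℕ) :=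
  (fib i x A).image (fun w k => w (i.succAbove k))

theorem mem_slice {n : ℕ} {i : Fin (n+1)} {x : ℕ} {A : Finset (Fin (n+1) → ℕ)} {v : Fin n → ℕ} :
    v ∈ slice i x A ↔ ins i x v ∈ A := by
  rw [slice, mem_image]
  constructor
  · rintro ⟨w, hw, rfl⟩
    obtain ⟨hw, rfl⟩ := mem_fib.1 hw
    rwa [← eq_ins]
  · intro h
    exact ⟨_, mem_fib.2 ⟨h, by simp⟩, by simp⟩

theorem card_slice {n : ℕ} (i : Fin (n+1)) (x : ℕ) (A : Finset (Fin (n+1) → ℕ)) :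
    #(slice i x A) = #(fib i x A) := by
  apply Finset.card_image_of_injOn
  intro w hw w' hw' h
  obtain ⟨-, h1⟩ := mem_fib.1 hw
  obtain ⟨-, h2⟩ := mem_fib.1 hw'
  rw [eq_ins i w, eq_ins i w', h1, h2]
  exact congrArg _ h

theorem comp_up {n : ℕ} (ih : Main n) (a : Fin (n+1) → ℕ) (ha : Monotone a) (d : ℕ) 
    (i : Fin (n+1)) (A : Finset (Fin (n+1) → ℕ)) (hA : A ⊆ Box a d) :
    #(up a d (comp a d i A)) ≤ #(up a d A) := by
  rw [← comp_card a (d+1) i (up a d A) (filter_subset _ _)]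
  apply Finset.card_le_card
  intro w hw
  obtain ⟨hwB, v, hv, hvw⟩ := mem_up.1 hw
  have hvB : v ∈ Box a d := (mem_filter.1 hv).1
  have hvt := (mem_filter.1 hv).2
  obtain ⟨j, rfl⟩ := cover hvw (by rw [(mem_Box.1 hwB).2, (mem_Box.1 hvB).2])
  rw [comp, mem_filter]
  refine ⟨hwB, ?_⟩
  rw [mem_top, mem_fib]
  refine ⟨⟨hwB, rfl⟩, ?_⟩
  by_cases hji : j = i
  · subst hji
    -- same direction
    have h1 : #(fib j (v j) A) ≤ #(fib j ((v + Pi.single j 1 : Fin (n+1) → ℕ) j) (up a d A)) := by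
      apply Finset.card_le_card_of_injOn (fun y => y + Pi.single j 1)
      · intro y hy
        obtain ⟨hy, hyj⟩ := mem_fib.1 hy
        refine mem_fib.2 ⟨mem_up.2 ⟨?_, y, hy, le_single _ _⟩, by simp [hyj]⟩
        rw [mem_Box, sum_single, (mem_Box.1 (hA hy)).2]
        refine ⟨fun k => ?_, rfl⟩
        by_cases hk : k = j
        · subst hk
          have := (mem_Box.1 hwB).1 k
          simpa [hyj] using this
        · simpa [hk] using (mem_Box.1 (hA hy)).1 k
      · intro y _ y' _ h
        exact add_right_cancel h
    refine lt_of_le_of_lt ?_ (lt_of_lt_of_le (mem_top.1 hvt).2 h1)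
    -- count
    refine (Finset.card_le_card ?_).trans (Finset.card_image_le (f := fun y => y + Pi.single j 1))
    intro y hy
    obtain ⟨hy, hlt⟩ := mem_filter.1 hy
    obtain ⟨hy, hyj⟩ := mem_fib.1 hy
    obtain ⟨y, rfl⟩ := exists_sub y j (by rw [hyj]; simp)
    refine mem_image.2 ⟨y, mem_filter.2 ⟨mem_fib.2 ⟨?_, ?_⟩, ?_⟩, rfl⟩
    · rw [mem_Box, sum_single] at hy
      exact mem_Box.2 ⟨fun k => lt_of_le_of_lt (le_single y j k) (hy.1 k), by omega⟩
    · simpa using hyj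
    · obtain ⟨t, h1, h2⟩ := (lex_lt_iff _ _).1 hlt
      refine (lex_lt_iff _ _).2 ⟨t, fun k hk => ?_, ?_⟩
      · simpa using h1 k hk
      · simpa using h2
  · obtain ⟨k, rfl⟩ := Fin.exists_succAbove_eq hji
    have hvi : (v + Pi.single (i.succAbove k) 1 : Fin (n+1) → ℕ) i = v i := by
      simp [(Fin.succAbove_ne i k).symm]
    rw [hvi]
    set w := (v + Pi.single (i.succAbove k) 1 : Fin (n+1) → ℕ) with hwdef
    obtain ⟨e, rfl⟩ : ∃ e, d = v i + e := by
      refine Nat.exists_eq_add_of_le ?_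
      rw [← (mem_Box.1 hvB).2]
      exact Finset.single_le_sum (f := v) (fun _ _ => Nat.zero_le _) (mem_univ i)
    set x := v i with hx
    have hxa : x < a i := (mem_Box.1 hvB).1 i
    set a' : Fin n → ℕ := fun k => a (i.succAbove k) with ha'
    have hfle : #(fib i x A) ≤ #(fib i x (Box a (x+e))) := card_le_card (fib_mono hA)
    have htop := top_seg _ _ hfle
    set S := top (fib i x (Box a (x+e))) #(fib i x A) with hSdef
    have hS : Seg (Box a' e) (slice i x S) := by
      constructor
      · intro y hy
        exact ((ins_mem_Box a i x e y).1 (mem_fib.1 (htop.1 (mem_slice.1 hy))).1).2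
      · intro y hy z hz hyz
        refine mem_slice.2 (htop.2 _ (mem_slice.1 hy) _ (mem_fib.2 ⟨?_, by simp⟩) ?_)
        · exact (ins_mem_Box a i x e z).2 ⟨hxa, hz⟩
        · exact (ins_lex _ _ _ _).2 hyz
    have hcard : #(slice i x S) = #(slice i x A) := by
      rw [card_slice, card_slice, ← top_card _ _ hfle]
      congr 1
      ext y
      rw [mem_fib]
      exact ⟨fun h => h.1, fun h => ⟨h, (mem_fib.1 (htop.1 h)).2⟩⟩
    have hA' : slice i x A ⊆ Box a' e := fun y hy =>
      ((ins_mem_Box a i x e y).1 (hA (mem_slice.1 hy))).2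
    have key := ih a' (fun _ _ h => ha ((Fin.strictMono_succAbove i).monotone h)) e _ _ hA' hS hcard
    have h2 : #(up a' e (slice i x A)) ≤ #(fib i x (up a (x+e) A)) := by
      rw [← card_slice]
      apply card_le_card
      intro y hy
      obtain ⟨hyB, z, hz, hzy⟩ := mem_up.1 hy
      refine mem_slice.2 (mem_up.2 ⟨?_, _, mem_slice.1 hz, (ins_le _ _ _ _).2 hzy⟩)
      rw [add_assoc]
      exact (ins_mem_Box a i x (e+1) y).2 ⟨hxa, hyB⟩
    refine lt_of_lt_of_le ?_ (key.trans h2)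
    have hT := seg_up hS
    have hwi : w = ins i x (fun k => w (i.succAbove k)) := by
      conv_lhs => rw [eq_ins i w, hvi]
    set w' := (fun k => w (i.succAbove k)) with hw'
    have hvi' : v = ins i x (fun k => v (i.succAbove k)) := eq_ins i v
    have hwT : w' ∈ up a' e (slice i x S) := by
      refine mem_up.2 ⟨?_, (fun k => v (i.succAbove k)), mem_slice.2 (hvi' ▸ hvt), fun k => hvw _⟩
      rw [hwi, add_assoc] at hwB
      exact ((ins_mem_Box a i x (e+1) w').1 hwB).2
    have hsub : slice i x ((fib i x (Box a (x + e + 1))).filter (fun y => toLex w < toLex y)) ⊂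
        up a' e (slice i x S) := by
      rw [Finset.ssubset_iff_of_subset]
      · refine ⟨w', hwT, fun h => ?_⟩
        have := (mem_filter.1 (mem_slice.1 h)).2
        rw [← hwi] at this
        exact lt_irrefl _ this
      · intro y hy
        obtain ⟨h1, h2⟩ := mem_filter.1 (mem_slice.1 hy)
        rw [hwi, ins_lex] at h2
        refine hT.2 w' hwT y ?_ h2
        have := (mem_fib.1 h1).1
        rw [add_assoc] at this
        exact ((ins_mem_Box a i x (e+1) y).1 this).2
    have h3 := card_lt_card hsub
    rw [card_slice] at h3
    refine lt_of_le_of_lt (card_le_card ?_) h3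
    intro y hy
    exact mem_fib.2 ⟨hy, (mem_fib.1 (mem_filter.1 hy).1).2⟩


/-- colex key -/
def key {n : ℕ} (A : Finset (Fin n → ℕ)) : Colex (Finset (Lex (Fin n → ℕ))) :=
  toColex (A.map toLex.toEmbedding)

theorem key_inj {n : ℕ} {A B : Finset (Fin n → ℕ)} (h : key A = key B) : A = B := by
  have := toColex.injective h
  exact Finset.map_injective _ this

theorem key_le {n : ℕ} {A B : Finset (Fin n → ℕ)}
    (h : ∀ x ∈ A, x ∉ B → ∃ b ∈ B, b ∉ A ∧ toLex x ≤ toLex b) : key A ≤ key B := by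
  rw [key, key, Finset.Colex.toColex_le_toColex]
  intro x hx hxB
  rw [Finset.mem_map] at hx
  obtain ⟨x, hx, rfl⟩ := hx
  obtain ⟨b, hb, hbA, hle⟩ := h x hx (fun h => hxB (Finset.mem_map_of_mem _ h))
  refine ⟨toLex b, Finset.mem_map_of_mem toLex.toEmbedding hb, ?_, hle⟩
  intro hcon
  obtain ⟨y, hy, hyb⟩ := Finset.mem_map.1 hcon
  exact hbA (toLex.injective hyb ▸ hy)

theorem key_comp {n : ℕ} (a : Fin n → ℕ) (d : ℕ) (i : Fin n) (A : Finset (Fin n → ℕ)) 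
    (hA : A ⊆ Box a d) : key A ≤ key (comp a d i A) := by
  apply key_le
  intro x hx hxc
  have hfle : #(fib i (x i) A) ≤ #(fib i (x i) (Box a d)) := card_le_card (fib_mono hA)
  have hseg := top_seg _ _ hfle
  have hcard := top_card _ _ hfle
  rw [← fib_comp] at hseg hcard
  have hx1 : x ∈ fib i (x i) A := mem_fib.2 ⟨hx, rfl⟩
  have hx2 : x ∉ fib i (x i) (comp a d i A) := fun h => hxc (mem_fib.1 h).1
  have hns : ¬ fib i (x i) (comp a d i A) ⊆ fib i (x i) A := by
    intro h
    have := Finset.eq_of_subset_of_card_le h hcard.ge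
    exact hx2 (this ▸ hx1)
  rw [Finset.not_subset] at hns
  obtain ⟨b, hb, hbA⟩ := hns
  refine ⟨b, (mem_fib.1 hb).1, fun h => hbA (mem_fib.2 ⟨h, (mem_fib.1 hb).2⟩), ?_⟩
  by_contra hlt
  exact hx2 (hseg.2 b hb x (mem_fib.2 ⟨hA hx, rfl⟩) (not_le.1 hlt))

theorem comp_fixed {n : ℕ} {a : Fin n → ℕ} {d : ℕ} {i : Fin n} {A : Finset (Fin n → ℕ)} 
    (hA : A ⊆ Box a d) (h : comp a d i A = A) (u v : Fin n → ℕ) (hu : u ∈ Box a d) (hv : v ∈ A)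
    (huv : u i = v i) (hlt : toLex v < toLex u) : u ∈ A := by
  have hfle : #(fib i (v i) A) ≤ #(fib i (v i) (Box a d)) := card_le_card (fib_mono hA)
  have hseg := top_seg _ _ hfle
  rw [← fib_comp, h] at hseg
  exact (mem_fib.1 (hseg.2 v (mem_fib.2 ⟨hv, rfl⟩) u (mem_fib.2 ⟨hu, huv⟩) hlt)).1

/-- The key lemma for compressed sets. -/
theorem last_lt {n : ℕ} {a : Fin (n+3) → ℕ} {d : ℕ} {A : Finset (Fin (n+3) → ℕ)} 
    (hA : A ⊆ Box a d)
    (hc : ∀ i, ∀ u ∈ Box a d, ∀ v ∈ A, u i = v i → toLex v < toLex u → u ∈ A)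
    (u : Fin (n+3) → ℕ) (hu : u ∈ Box a d) (huA : u ∉ A) (m : ℕ) :
    ∀ w ∈ A, toLex w < toLex u → w (Fin.last _) ≠ u (Fin.last _) + m := by
  induction m with
  | zero =>
    intro w hw hwu h
    exact huA (hc _ u hu w hw h.symm hwu)
  | succ m ih =>
    intro w hw hwu h
    have hwB := mem_Box.1 (hA hw)
    have huB := mem_Box.1 hu
    have h0 : w 0 < u 0 := by
      obtain ⟨t, h1, h2⟩ := (lex_lt_iff _ _).1 hwu
      by_cases ht : t = 0
      · rwa [← ht]
      · have := h1 0 (Fin.pos_iff_ne_zero.2 ht)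
        exact absurd (hc 0 u hu w hw this.symm hwu) huA
    obtain ⟨w₀, rfl⟩ := exists_sub w (Fin.last _) (by omega)
    have hmove : ∀ i : Fin (n+3), i ≠ Fin.last _ → w₀ i + 1 < a i →
        w₀ + Pi.single i 1 ∈ A ∧ (w₀ + Pi.single i 1 : Fin (n+3) → ℕ) (Fin.last _) = u (Fin.last _) + m := by
      intro i hi hia
      have hB : w₀ + Pi.single i 1 ∈ Box a d := by
        rw [mem_Box, sum_single]
        rw [sum_single] at hwB
        refine ⟨fun k => ?_, hwB.2⟩
        by_cases hk : k = i
        · subst hk; simpa using hia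
        · have := hwB.1 k
          have : w₀ k ≤ (w₀ + Pi.single (Fin.last _) 1 : Fin (n+3) → ℕ) k := le_single w₀ (Fin.last _) k
          simp [hk]; omega
      have hlt : toLex (w₀ + Pi.single (Fin.last (n+2)) 1) < toLex (w₀ + Pi.single i 1) :=
        lex_swap (i := i) (j := Fin.last _) (Fin.lt_last_iff_ne_last.2 hi) (by abel)
      constructor
      · obtain ⟨k, hk1, hk2⟩ : ∃ k : Fin (n+3), k ≠ i ∧ k ≠ Fin.last _ := by
          by_cases hi0 : i = 0
          · subst hi0
            refine ⟨1, ?_, ?_⟩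
            · simp
            · simp [Fin.ext_iff]
          · refine ⟨0, fun h => hi0 h.symm, ?_⟩
            simp [Fin.ext_iff]
        exact hc k _ hB _ hw (by simp [hk1, hk2]) hlt
      · simp at h
        simp [hi.symm]; omega
    have hl0 : (0 : Fin (n+3)) ≠ Fin.last _ := by simp [Fin.ext_iff]
    simp only [Pi.add_apply, Pi.single_eq_of_ne hl0, add_zero] at h0
    by_cases hmid : ∃ i : Fin (n+3), i ≠ 0 ∧ i ≠ Fin.last _ ∧ w₀ i + 1 < a i
    · obtain ⟨i, hi0, hil, hia⟩ := hmid
      obtain ⟨h1, h2⟩ := hmove i hil hia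
      refine ih _ h1 ?_ h2
      refine (lex_lt_iff _ _).2 ⟨0, fun j hj => absurd hj (by simp), ?_⟩
      simpa [hi0.symm] using h0
    · push Not at hmid
      obtain ⟨h1, h2⟩ := hmove 0 hl0 (by have := huB.1 0; omega)
      by_cases hlt : toLex (w₀ + Pi.single 0 1) < toLex u
      · exact ih _ h1 hlt h2
      · have hge : ∀ k, u k ≤ (w₀ + Pi.single 0 1 : Fin (n+3) → ℕ) k := by
          intro k
          by_cases hkl : k = Fin.last _
          · subst hkl; omega
          by_cases hk0 : k = 0
          · subst hk0
            by_contra hcon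
            refine hlt ((lex_lt_iff _ _).2 ⟨0, fun j hj => absurd hj (by simp), not_le.1 hcon⟩)
          · have h3 := hmid k hk0 hkl
            have h4 := huB.1 k
            simp [hk0]; omega
        have hs : ∑ k, u k = ∑ k, (w₀ + Pi.single 0 1 : Fin (n+3) → ℕ) k := by
          rw [huB.2, (mem_Box.1 (hA h1)).2]
        have := (Finset.sum_eq_sum_iff_of_le (fun i (_ : i ∈ univ) => hge i)).1 hs
        have : u = w₀ + Pi.single 0 1 := funext fun k => this k (mem_univ k)
        exact huA (this ▸ h1)

theorem exchange {n : ℕ} {a : Fin (n+3) → ℕ} {d : ℕ} {A : Finset (Fin (n+3) → ℕ)} 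
    (hA : A ⊆ Box a d)
    (hc : ∀ i, ∀ u ∈ Box a d, ∀ v ∈ A, u i = v i → toLex v < toLex u → u ∈ A)
    (hns : ¬ Seg (Box a d) A) :
    ∃ A' ⊆ Box a d, #A' = #A ∧ #(up a d A') ≤ #(up a d A) ∧ key A < key A' := by
  have : ∃ v ∈ A, ∃ u ∈ Box a d, toLex v < toLex u ∧ u ∉ A := by
    by_contra hcon
    push Not at hcon
    exact hns ⟨hA, hcon⟩
  obtain ⟨v₁, hv₁, u₁, hu₁, hlt₁, hu₁A⟩ := this
  obtain ⟨u, hu, humax⟩ := Finset.exists_max_image (Box a d \ A) toLex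
    ⟨u₁, mem_sdiff.2 ⟨hu₁, hu₁A⟩⟩
  obtain ⟨v, hv, hvmin⟩ := Finset.exists_min_image A toLex ⟨v₁, hv₁⟩
  obtain ⟨huB, huA⟩ := mem_sdiff.1 hu
  have hvu : toLex v < toLex u :=
    ((hvmin v₁ hv₁).trans_lt hlt₁).trans_le (humax u₁ (mem_sdiff.2 ⟨hu₁, hu₁A⟩))
  have hlast : v (Fin.last _) < u (Fin.last _) := by
    by_contra hcon
    obtain ⟨m, hm⟩ := Nat.exists_eq_add_of_le (not_lt.1 hcon)
    exact last_lt hA hc u huB huA m v hv hvu hm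
  have hvB := hA hv
  have hvne : v ≠ u := fun h => huA (h ▸ hv)
  refine ⟨insert u (A.erase v), ?_, ?_, ?_, ?_⟩
  · exact Finset.insert_subset huB ((erase_subset _ _).trans hA)
  · rw [card_insert_of_notMem (fun h => huA (erase_subset _ _ h)), card_erase_add_one hv]
  · have hvup : v + Pi.single (Fin.last _) 1 ∈ up a d A := by
      refine mem_up.2 ⟨mem_Box.2 ⟨fun k => ?_, by rw [sum_single, (mem_Box.1 hvB).2]⟩, v, hv,
        le_single _ _⟩
      by_cases hk : k = Fin.last _
      · subst hk
        have := (mem_Box.1 huB).1 (Fin.last _)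
        simp; omega
      · simpa [hk] using (mem_Box.1 hvB).1 k
    have hsub : up a d (insert u (A.erase v)) ⊆
        insert (u + Pi.single (Fin.last _) 1) ((up a d A).erase (v + Pi.single (Fin.last _) 1)) := by
      intro w hw
      obtain ⟨hwB, y, hy, hyw⟩ := mem_up.1 hw
      rw [mem_insert, mem_erase]
      rw [mem_insert] at hy
      rcases hy with rfl | hy
      · obtain ⟨j, rfl⟩ := cover hyw (by rw [(mem_Box.1 hwB).2, (mem_Box.1 huB).2])
        by_cases hj : j = Fin.last _
        · left; rw [hj]
        right
        obtain ⟨y₀, rfl⟩ := exists_sub y (Fin.last _) (by omega)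
        have heq : (y₀ + Pi.single j 1) + Pi.single (Fin.last _) 1 =
          y₀ + Pi.single (Fin.last _) 1 + Pi.single j 1 := by abel
        have hlt : toLex (y₀ + Pi.single (Fin.last _) 1) < toLex (y₀ + Pi.single j 1) :=
          lex_swap (Fin.lt_last_iff_ne_last.2 hj) heq
        have hB : y₀ + Pi.single j 1 ∈ Box a d := by
          have h1 := mem_Box.1 hwB
          rw [← heq, sum_single] at h1
          exact mem_Box.2 ⟨fun k => lt_of_le_of_lt (le_single _ _ k) (h1.1 k), by omega⟩
        have hmem : y₀ + Pi.single j 1 ∈ A := by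
          by_contra hcon
          exact absurd (humax _ (mem_sdiff.2 ⟨hB, hcon⟩)) (not_le.2 hlt)
        refine ⟨fun h => ?_, mem_up.2 ⟨hwB, _, hmem, heq ▸ le_single _ _⟩⟩
        rw [← heq] at h
        have := add_right_cancel h
        rw [this] at hlt
        exact lt_asymm hlt hvu
      · right
        obtain ⟨hyv, hyA⟩ := mem_erase.1 hy
        refine ⟨fun h => ?_, mem_up.2 ⟨hwB, y, hyA, hyw⟩⟩
        obtain ⟨j, hj⟩ := cover hyw (by rw [(mem_Box.1 hwB).2, (mem_Box.1 (hA hyA)).2])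
        rw [h] at hj
        by_cases hjl : j = Fin.last _
        · rw [hjl] at hj
          exact hyv (add_right_cancel hj).symm
        · have := lex_swap (Fin.lt_last_iff_ne_last.2 hjl) hj
          exact absurd (hvmin y hyA) (not_le.2 this)
    refine (card_le_card hsub).trans ((card_insert_le _ _).trans ?_)
    rw [card_erase_add_one hvup]
  · apply lt_of_le_of_ne
    · apply key_le
      intro x hx hx'
      have : x = v := by
        by_contra hne
        exact hx' (mem_insert_of_mem (mem_erase.2 ⟨hne, hx⟩))
      subst this
      exact ⟨u, mem_insert_self _ _, huA, hvu.le⟩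
    · intro h
      have := key_inj h
      exact huA (this ▸ mem_insert_self _ _)

theorem main_step {n : ℕ} (ih : Main (n+2)) : Main (n+3) := by
  intro a ha d A₀ S hA₀ hS hcard
  obtain ⟨A, hAF, hmax⟩ := Finset.exists_max_image
    ((Box a d).powerset.filter (fun A => #A = #A₀ ∧ #(up a d A) ≤ #(up a d A₀))) key
    ⟨A₀, by simp [hA₀]⟩
  simp only [mem_filter, mem_powerset] at hAF hmax
  obtain ⟨hA, hAc, hAu⟩ := hAF
  have hfix : ∀ i, comp a d i A = A := by
    intro i
    have h1 := hmax (comp a d i A) ⟨filter_subset _ _, by rw [comp_card a d i A hA, hAc],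
      (comp_up ih a ha d i A hA).trans hAu⟩
    exact key_inj (le_antisymm h1 (key_comp a d i A hA))
  have hseg : Seg (Box a d) A := by
    by_contra hns
    obtain ⟨A', h1, h2, h3, h4⟩ := exchange hA
      (fun i u hu v hv huv hlt => comp_fixed hA (hfix i) u v hu hv huv hlt) hns
    exact absurd (hmax A' ⟨h1, h2.trans hAc, h3.trans hAu⟩) (not_le.2 h4)
  rw [hS.eq hseg (hcard.trans hAc.symm)]
  exact hAu


theorem main_small {n : ℕ} (h : ∀ (a : Fin n → ℕ) (d : ℕ), ∀ u ∈ Box a d, ∀ v ∈ Box a d, u = v) :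
    Main n := by
  intro a _ d A S hA hS hcard
  have hseg : Seg (Box a d) A := by
    refine ⟨hA, fun v hv u hu _ => ?_⟩
    rw [h a d u hu v (hA hv)]
    exact hv
  rw [hS.eq hseg hcard]

theorem main_zero : Main 0 := main_small fun _ _ u _ v _ => Subsingleton.elim u v

theorem main_one : Main 1 := main_small fun a d u hu v hv => by
  have h1 := (mem_Box.1 hu).2
  have h2 := (mem_Box.1 hv).2
  simp only [univ_unique, Fin.default_eq_zero, sum_singleton] at h1 h2
  funext i
  rw [Subsingleton.elim i 0, h1, h2]

theorem mem_Box2 {a : Fin 2 → ℕ} {d : ℕ} {w : Fin 2 → ℕ} :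
    w ∈ Box a d ↔ (w 0 < a 0 ∧ w 1 < a 1) ∧ w 0 + w 1 = d := by
  rw [mem_Box, Fin.forall_fin_two, Fin.sum_univ_two]

theorem ext2 {u v : Fin 2 → ℕ} (h0 : u 0 = v 0) (h1 : u 1 = v 1) : u = v := by
  funext i
  fin_cases i
  · exact h0
  · exact h1

theorem e0_0 (v : Fin 2 → ℕ) : (v + Pi.single 0 1 : Fin 2 → ℕ) 0 = v 0 + 1 := by simp
theorem e0_1 (v : Fin 2 → ℕ) : (v + Pi.single 0 1 : Fin 2 → ℕ) 1 = v 1 := by simp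
theorem e1_0 (v : Fin 2 → ℕ) : (v + Pi.single 1 1 : Fin 2 → ℕ) 0 = v 0 := by simp
theorem e1_1 (v : Fin 2 → ℕ) : (v + Pi.single 1 1 : Fin 2 → ℕ) 1 = v 1 + 1 := by simp

theorem main_two : Main 2 := by
  intro a ha d A S hA hS hcard
  have h01 : a 0 ≤ a 1 := ha (by simp)
  by_cases hfull : A = Box a d
  · have : S = A := by
      rw [hfull]
      exact Finset.eq_of_subset_of_card_le hS.1 (by rw [hcard, hfull])
    rw [this]
  have hup : up a d S ⊆ S.image (fun y => y + Pi.single 1 1) ∪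
      (if d + 1 < a 0 then {![d+1, 0]} else ∅) := by
    intro w hw
    obtain ⟨hwB, y, hy, hyw⟩ := mem_up.1 hw
    have hyB := mem_Box2.1 (hS.1 hy)
    have hwB' := mem_Box2.1 hwB
    obtain ⟨j, rfl⟩ := cover hyw (by rw [(mem_Box.1 hwB).2, (mem_Box.1 (hS.1 hy)).2])
    rw [mem_union, mem_image]
    have hj : j = 0 ∨ j = 1 := by fin_cases j <;> simp
    rcases hj with rfl | rfl
    · rw [e0_0, e0_1] at hwB'
      by_cases hy1 : y 1 = 0
      · right
        rw [if_pos (by omega), mem_singleton]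
        apply ext2
        · rw [e0_0]; simp; omega
        · rw [e0_1]; simp; omega
      · left
        obtain ⟨y₀, rfl⟩ := exists_sub y 1 (by omega)
        rw [e1_0, e1_1] at hwB' hyB
        have heq : (y₀ + Pi.single 0 1) + Pi.single 1 1 =
          y₀ + Pi.single 1 1 + Pi.single 0 1 := by abel
        refine ⟨y₀ + Pi.single 0 1, ?_, heq⟩
        refine hS.2 _ hy _ (mem_Box2.2 ?_) (lex_swap (i := 0) (j := 1) (by simp) heq)
        rw [e0_0, e0_1]; omega
    · left; exact ⟨y, hy, rfl⟩
  by_cases hd : d + 1 < a 0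
  · rw [if_pos hd] at hup
    rcases A.eq_empty_or_nonempty with rfl | hne
    · have : S = ∅ := by rw [← card_eq_zero, hcard]; rfl
      rw [this]
    · obtain ⟨t, ht, htmax⟩ := Finset.exists_max_image A (fun w => w 0) hne
      have h1 : #(up a d S) ≤ #S + 1 := by
        refine (card_le_card hup).trans ((card_union_le _ _).trans ?_)
        rw [card_singleton]
        exact Nat.add_le_add_right card_image_le 1
      have h2 : insert (t + Pi.single 0 1) (A.image (fun y => y + Pi.single 1 1)) ⊆ up a d A := by
        apply Finset.insert_subset
        · have := mem_Box2.1 (hA ht)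
          refine mem_up.2 ⟨mem_Box2.2 ?_, t, ht, le_single _ _⟩
          rw [e0_0, e0_1]; omega
        · intro w hw
          obtain ⟨y, hy, rfl⟩ := mem_image.1 hw
          have := mem_Box2.1 (hA hy)
          refine mem_up.2 ⟨mem_Box2.2 ?_, y, hy, le_single _ _⟩
          rw [e1_0, e1_1]; omega
      have h3 := card_le_card h2
      rw [card_insert_of_notMem, card_image_of_injective] at h3
      · omega
      · intro y y' h
        exact add_right_cancel h
      · intro h
        obtain ⟨y, hy, hyt⟩ := mem_image.1 h
        have h4 := congrFun hyt 0
        rw [e0_0] at h4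
        simp only [e1_0] at h4
        have := htmax y hy
        omega
  · rw [if_neg hd, union_empty] at hup
    have h1 : #(up a d S) ≤ #A := by
      rw [← hcard]
      exact (card_le_card hup).trans card_image_le
    refine h1.trans ?_
    have : ∃ x ∈ Box a d, x ∉ A := by
      by_contra hcon
      push Not at hcon
      exact hfull (hA.antisymm hcon)
    obtain ⟨x, hxB, hxA⟩ := this
    have hxB' := mem_Box2.1 hxB
    have hne : ∀ y ∈ A, y 0 ≠ x 0 := by
      intro y hy h
      have h2 := mem_Box2.1 (hA hy)
      exact hxA (ext2 h (show y 1 = x 1 by omega) ▸ hy)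
    apply Finset.card_le_card_of_injOn
      (fun y => if x 0 < y 0 then y + Pi.single 1 1 else y + Pi.single 0 1)
    · intro y hy
      have h2 := mem_Box2.1 (hA hy)
      have h3 := hne y hy
      simp only [Finset.mem_coe]
      split_ifs with h
      · refine mem_up.2 ⟨mem_Box2.2 ?_, y, hy, le_single _ _⟩
        rw [e1_0, e1_1]; omega
      · refine mem_up.2 ⟨mem_Box2.2 ?_, y, hy, le_single _ _⟩
        rw [e0_0, e0_1]; omega
    · intro y hy y' hy' h
      have h3 := hne y hy
      have h3' := hne y' hy'
      simp only at h
      split_ifs at h with c1 c2 c2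
      · exact add_right_cancel h
      · have := congrFun h 0
        rw [e0_0, e1_0] at this; omega
      · have := congrFun h 0
        rw [e0_0, e1_0] at this; omega
      · exact add_right_cancel h

theorem main_all : ∀ n, Main n
  | 0 => main_zero
  | 1 => main_one
  | 2 => main_two
  | n+3 => main_step (main_all (n+2))


/-- box condition -/
def InBox {n p : ℕ} (hp : p ≤ n) (a : Fin p → ℕ) (w : Fin n → ℕ) : Prop :=
  ∀ i : Fin p, w (Fin.castLE hp i) < a i

/-- finite bounding box -/
def bb {n p : ℕ} (a : Fin p → ℕ) (e : ℕ) (i : Fin n) : ℕ :=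
  if h : i.1 < p then a ⟨i.1, h⟩ else (∑ j, a j) + e + 1

theorem bb_mono {n p : ℕ} (a : Fin p → ℕ) (ha : Monotone a) (e : ℕ) :
    Monotone (bb (n := n) a e) := by
  intro i j hij
  unfold bb
  have hij' : i.1 ≤ j.1 := hij
  split_ifs with h1 h2 h2
  · exact ha (by simpa using hij)
  · have := Finset.single_le_sum (f := a) (fun _ _ => Nat.zero_le _) (mem_univ ⟨i.1, h1⟩)
    omega
  · omega
  · exact le_rfl

theorem mem_bb {n p : ℕ} (hp : p ≤ n) (a : Fin p → ℕ) {d e : ℕ} (hde : d ≤ e) (w : Fin n → ℕ) :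
    w ∈ Box (bb a e) d ↔ InBox hp a w ∧ ∑ i, w i = d := by
  rw [mem_Box]
  constructor
  · rintro ⟨h1, h2⟩
    refine ⟨fun i => ?_, h2⟩
    have := h1 (Fin.castLE hp i)
    simpa [bb] using this
  · rintro ⟨h1, h2⟩
    refine ⟨fun i => ?_, h2⟩
    unfold bb
    split_ifs with h
    · exact h1 ⟨i.1, h⟩
    · have := Finset.single_le_sum (f := w) (fun _ _ => Nat.zero_le _) (mem_univ i)
      omega

theorem mem_all {n d : ℕ} (w : Fin n → ℕ) : w ∈ Box (fun _ => d + 1) d ↔ ∑ i, w i = d := by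
  rw [mem_Box]
  refine ⟨fun h => h.2, fun h => ⟨fun i => ?_, h⟩⟩
  have := Finset.single_le_sum (f := w) (fun _ _ => Nat.zero_le _) (mem_univ i)
  omega

theorem combinatorial {n p : ℕ} (hp : p ≤ n) (a : Fin p → ℕ) (ha : Monotone a)
    (P : (Fin n → ℕ) → Prop) (hP : ∀ v w, v ≤ w → P v → P w) (hPb : ∀ w, ¬ InBox hp a w → P w) :
    ∃ T : (Fin n → ℕ) → Prop, (∀ v w, v ≤ w → T v → T w) ∧ (∀ w, ¬ InBox hp a w → T w) ∧
      (∀ d, #((Box (fun _ => d + 1) d).filter P) = #((Box (fun _ => d + 1) d).filter T)) ∧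
      ∀ u v : Fin n → ℕ, ∑ i, u i = ∑ i, v i → InBox hp a u → InBox hp a v →
        ¬ T u → toLex v < toLex u → ¬ T v := by
  set N : ℕ → Finset (Fin n → ℕ) := fun d => Box (bb a d) d with hN
  have memN : ∀ d w, w ∈ N d ↔ InBox hp a w ∧ ∑ i, w i = d := fun d w => mem_bb hp a le_rfl w
  set S : ℕ → Finset (Fin n → ℕ) := fun d => top (N d) #((N d).filter P) with hSdef
  have hle : ∀ d, #((N d).filter P) ≤ #(N d) := fun d => card_le_card (filter_subset _ _)
  have hseg : ∀ d, Seg (N d) (S d) := fun d => top_seg _ _ (hle d)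
  have hSc : ∀ d, #(S d) = #((N d).filter P) := fun d => top_card _ _ (hle d)
  have hN' : ∀ d, N d = Box (bb a (d+1)) d := by
    intro d
    ext w
    rw [memN, mem_bb hp a (Nat.le_succ d)]
  have hup : ∀ d, up (bb a (d+1)) d (S d) ⊆ S (d+1) := by
    intro d
    have h1 : Seg (Box (bb a (d+1)) d) (S d) := hN' d ▸ hseg d
    refine (seg_up h1).comparable (hseg (d+1)) ?_
    have h2 := main_all n (bb a (d+1)) (bb_mono a ha _) d ((N d).filter P) (S d)
      (by rw [← hN']; exact filter_subset _ _) h1 (hSc d)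
    refine h2.trans ?_
    rw [hSc]
    apply card_le_card
    intro w hw
    obtain ⟨hwB, v, hv, hvw⟩ := mem_up.1 hw
    exact mem_filter.2 ⟨hwB, hP v w hvw (mem_filter.1 hv).2⟩
  obtain ⟨T, hT⟩ : ∃ T : (Fin n → ℕ) → Prop, ∀ w, T w ↔ (¬ InBox hp a w ∨ w ∈ S (∑ i, w i)) :=
    ⟨fun w => ¬ InBox hp a w ∨ w ∈ S (∑ i, w i), fun _ => Iff.rfl⟩
  have hstep : ∀ v j, T v → T (v + Pi.single j 1) := by
    intro v j hv
    rw [hT] at hv ⊢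
    by_cases hb : InBox hp a (v + Pi.single j 1)
    · right
      have hvb : InBox hp a v := fun i => lt_of_le_of_lt (le_single v j _) (hb i)
      have hvS : v ∈ S (∑ i, v i) := by
        rcases hv with h | h
        · exact absurd hvb h
        · exact h
      rw [sum_single]
      apply hup
      refine mem_up.2 ⟨?_, v, hvS, le_single _ _⟩
      rw [mem_bb hp a le_rfl, sum_single]
      exact ⟨hb, rfl⟩
    · left; exact hb
  refine ⟨T, ?_, fun w hw => (hT w).2 (Or.inl hw), ?_, ?_⟩
  · have : ∀ k, ∀ v w : Fin n → ℕ, v ≤ w → ∑ i, w i = ∑ i, v i + k → T v → T w := by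
      intro k
      induction k with
      | zero =>
        intro v w hvw hs hv
        have := (Finset.sum_eq_sum_iff_of_le (fun i (_ : i ∈ univ) => hvw i)).1 hs.symm
        have : v = w := funext fun k => this k (mem_univ k)
        exact this ▸ hv
      | succ k ih =>
        intro v w hvw hs hv
        have h1 : ∃ j, v j < w j := by
          by_contra hcon
          push Not at hcon
          have := Finset.sum_le_sum (fun i (_ : i ∈ univ) => hcon i)
          omega
        obtain ⟨j, hj⟩ := h1
        refine ih (v + Pi.single j 1) w ?_ ?_ (hstep v j hv)
        · intro i
          by_cases hi : i = j
          · subst hi; simp; omega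
          · simpa [hi] using hvw i
        · rw [sum_single]; omega
    intro v w hvw hv
    obtain ⟨k, hk⟩ := Nat.exists_eq_add_of_le (Finset.sum_le_sum (fun i (_ : i ∈ univ) => hvw i))
    exact this k v w hvw hk hv
  · intro d
    have split : ∀ Q : (Fin n → ℕ) → Prop, (∀ w, ¬ InBox hp a w → Q w) →
        #((Box (fun _ => d + 1) d).filter Q) = #((N d).filter Q) +
          #((Box (fun _ => d + 1) d).filter (fun w => ¬ InBox hp a w)) := by
      intro Q hQ
      rw [← card_union_of_disjoint]
      · congr 1
        ext w
        simp only [mem_filter, mem_union, mem_all, memN]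
        have := hQ w
        tauto
      · rw [Finset.disjoint_left]
        intro w h1 h2
        exact (mem_filter.1 h2).2 ((memN d w).1 (mem_filter.1 h1).1).1
    rw [split P hPb, split T (fun w hw => (hT w).2 (Or.inl hw)), ← hSc]
    congr 2
    ext w
    rw [mem_filter]
    constructor
    · intro h
      have h1 := (hseg d).1 h
      refine ⟨h1, (hT w).2 (Or.inr ?_)⟩
      rw [((memN d w).1 h1).2]
      exact h
    · rintro ⟨h1, h2⟩
      rw [hT] at h2
      have h3 := (memN d w).1 h1
      rcases h2 with h2 | h2
      · exact absurd h3.1 h2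
      · rwa [h3.2] at h2
  · intro u v hs hu hv hTu hlt hTv
    rw [hT] at hTu hTv
    rcases hTv with h | h
    · exact h hv
    · apply hTu
      right
      rw [hs]
      exact (hseg _).2 v h u ((memN _ _).2 ⟨hu, hs⟩) hlt

open MvPolynomial

/-- leading exponents -/
def leads {K : Type} [Field K] {n : ℕ} (W : Submodule K (MvPolynomial (Fin n) K)) :
    Set (Fin n →₀ ℕ) :=
  {m | ∃ f ∈ W, coeff m f ≠ 0 ∧ ∀ m', coeff m' f ≠ 0 → toLex m' ≤ toLex m}

theorem finrank_eq {K : Type} [Field K] {n : ℕ} (W : Submodule K (MvPolynomial (Fin n) K))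
    (hfin : (leads W).Finite) : Module.finrank K W = (leads W).ncard := by
  have : Fintype (leads W) := hfin.fintype
  rw [Set.ncard_eq_toFinset_card', Set.toFinset_card]
  let φ : W →ₗ[K] (leads W → K) :=
    { toFun := fun f m => coeff m.1 f.1
      map_add' := by intros; ext; simp
      map_smul' := by intros; ext; simp }
  have hφ : Function.Injective φ := by
    rw [← LinearMap.ker_eq_bot, LinearMap.ker_eq_bot']
    intro f hf
    by_contra hne
    have hne' : f.1 ≠ 0 := fun h => hne (Subtype.ext h)
    obtain ⟨m, hm, hmax⟩ := Finset.exists_max_image f.1.support toLex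
      (MvPolynomial.support_nonempty.2 hne')
    rw [mem_support_iff] at hm
    have hml : m ∈ leads W := ⟨f.1, f.2, hm, fun m' hm' => hmax m' (mem_support_iff.2 hm')⟩
    exact hm (congrFun hf ⟨m, hml⟩)
  have : Module.Finite K W := Module.Finite.of_injective φ hφ
  apply le_antisymm
  · have := LinearMap.finrank_le_finrank_of_injective hφ
    simpa using this
  · choose f hfW hf1 hf2 using (fun m : leads W => m.2)
    have hli : LinearIndependent K (fun m : leads W => (⟨f m, hfW m⟩ : W)) := by
      rw [linearIndependent_iff']
      intro s g hg i hi
      by_contra hgi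
      obtain ⟨m, hm, hmax⟩ := Finset.exists_max_image (s.filter (fun j => g j ≠ 0))
        (fun j => toLex j.1) ⟨i, mem_filter.2 ⟨hi, hgi⟩⟩
      obtain ⟨hms, hgm⟩ := mem_filter.1 hm
      have h1 := congrArg (fun w : W => coeff m.1 w.1) hg
      simp only [Submodule.coe_sum, Submodule.coe_smul, coeff_sum, coeff_smul,
        Submodule.coe_zero, coeff_zero] at h1
      rw [Finset.sum_eq_single m] at h1
      · simp only [smul_eq_mul, mul_eq_zero] at h1
        rcases h1 with h1 | h1
        · exact hgm h1
        · exact hf1 m h1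
      · intro j hj hjm
        by_cases hgj : g j = 0
        · simp [hgj]
        · have h2 := hmax j (mem_filter.2 ⟨hj, hgj⟩)
          have h3 : coeff m.1 (f j) = 0 := by
            by_contra hcon
            have h4 := hf2 j m.1 hcon
            exact hjm (Subtype.ext (toLex.injective (le_antisymm h2 h4)))
          simp [h3]
      · intro h; exact absurd hms h
    exact hli.fintype_card_le_finrank

/-- exponents as functions -/
noncomputable abbrev ef (n : ℕ) : (Fin n → ℕ) ≃ (Fin n →₀ ℕ) := Finsupp.equivFunOnFinite.symm

theorem finrank_count {K : Type} [Field K] {n : ℕ} (W : Submodule K (MvPolynomial (Fin n) K)) 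
    (d : ℕ) (Q : (Fin n → ℕ) → Prop)
    (h : ∀ w, ef n w ∈ leads W ↔ ∑ i, w i = d ∧ Q w) :
    Module.finrank K W = #((Box (fun _ => d + 1) d).filter Q) := by
  have heq : leads W = (ef n) '' ((Box (fun _ => d + 1) d).filter Q : Finset (Fin n → ℕ)) := by
    ext m
    obtain ⟨w, rfl⟩ := (ef n).surjective m
    rw [h, (ef n).injective.mem_set_image, Finset.mem_coe, mem_filter, mem_all]
  rw [finrank_eq, heq, Set.ncard_image_of_injective _ (ef n).injective, Set.ncard_coe_finset]
  rw [heq]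
  exact (Finset.finite_toSet _).image _

end CL

/-- Clements–Lindström, partial pure powers: for every homogeneous ideal `I`
containing `x_1^{a_1},...,x_p^{a_p}` there is a monomial ideal `L` containing these pure
powers, with the same Hilbert function as `I`, whose standard monomials in each degree are
the lexicographically smallest monomials of that degree not divisible by any `x_i^{a_i}`. -/
theorem stmt18 {K : Type} [Field K] {n p : ℕ} (hp : p ≤ n) (a : Fin p → ℕ)
    (ha2 : ∀ i, 2 ≤ a i) (hmono : Monotone a)
    (I : Ideal (MvPolynomial (Fin n) K)) (hI : IsHomog I)
    (hpow : ∀ i : Fin p, (X (Fin.castLE hp i) : MvPolynomial (Fin n) K) ^ a i ∈ I) :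
    ∃ L : Ideal (MvPolynomial (Fin n) K), IsMonomialIdeal L ∧
      (∀ i : Fin p, (X (Fin.castLE hp i) : MvPolynomial (Fin n) K) ^ a i ∈ L) ∧
      (∀ d : ℕ, hilb I d = hilb L d) ∧
      ∀ u v : Fin n →₀ ℕ, (∑ i, u i) = (∑ i, v i) →
        (∀ i : Fin p, u (Fin.castLE hp i) < a i) →
        (∀ i : Fin p, v (Fin.castLE hp i) < a i) →
        monomial u (1 : K) ∉ L → lexGT u v → monomial v (1 : K) ∉ L := by
  classical
  have hsum : ∀ (m : Fin n →₀ ℕ) (d : ℕ) (f : MvPolynomial (Fin n) K),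
      f ∈ homogeneousSubmodule (Fin n) K d → coeff m f ≠ 0 → ∑ i, m i = d := by
    intro m d f hf hm
    have := (mem_homogeneousSubmodule d f).1 hf hm
    rw [← this, Finsupp.weight_apply, Finsupp.sum_fintype _ _ (by simp)]
    simp
  have hmon : ∀ m : Fin n →₀ ℕ, monomial m (1 : K) ∈ homogeneousSubmodule (Fin n) K (∑ i, m i) := by
    intro m
    rw [mem_homogeneousSubmodule]
    apply isHomogeneous_monomial
    rw [Finsupp.degree_eq_sum]
  set W : Ideal (MvPolynomial (Fin n) K) → ℕ → Submodule K (MvPolynomial (Fin n) K) :=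
    fun J d => Submodule.restrictScalars K J ⊓ homogeneousSubmodule (Fin n) K d with hW
  have hmonlead : ∀ (J : Ideal (MvPolynomial (Fin n) K)) (m : Fin n →₀ ℕ),
      monomial m (1 : K) ∈ J → m ∈ CL.leads (W J (∑ i, m i)) := by
    intro J m hm
    refine ⟨monomial m 1, ⟨hm, hmon m⟩, by simp, fun m' hm' => ?_⟩
    rw [coeff_monomial] at hm'
    have : m = m' := by
      by_contra hne
      simp [hne] at hm'
    rw [this]
  have hpowmem : ∀ (J : Ideal (MvPolynomial (Fin n) K)) (i : Fin n) (k : ℕ) (m : Fin n →₀ ℕ),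
      (X i : MvPolynomial (Fin n) K) ^ k ∈ J → k ≤ m i → monomial m (1 : K) ∈ J := by
    intro J i k m hJ hk
    have hle : Finsupp.single i k ≤ m := Finsupp.single_le_iff.2 hk
    rw [X_pow_eq_monomial] at hJ
    have : monomial m (1 : K) = monomial (m - Finsupp.single i k) 1 * monomial (Finsupp.single i k) 1 := by
      rw [monomial_mul, tsub_add_cancel_of_le hle, one_mul]
    rw [this]
    exact J.mul_mem_left _ hJ
  set P : (Fin n → ℕ) → Prop := fun w => CL.ef n w ∈ CL.leads (W I (∑ i, w i)) with hPdef
  have hP : ∀ v w, v ≤ w → P v → P w := by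
    intro v w hvw hv
    obtain ⟨f, ⟨hfI, hfH⟩, h1, h2⟩ := hv
    obtain ⟨c, rfl⟩ := exists_add_of_le hvw
    have hef : CL.ef n (v + c) = CL.ef n c + CL.ef n v := by
      ext i; simp [add_comm]
    refine ⟨monomial (CL.ef n c) 1 * f, ⟨I.mul_mem_left _ hfI, ?_⟩, ?_, ?_⟩
    · have h3 := (mem_homogeneousSubmodule _ _).1 (hmon (CL.ef n c))
      have h4 := h3.mul ((mem_homogeneousSubmodule _ _).1 hfH)
      have h5 : (∑ i, CL.ef n c i) + ∑ i, v i = ∑ i, (v + c) i := by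
        simp [Finset.sum_add_distrib, add_comm]
      rw [h5] at h4
      exact (mem_homogeneousSubmodule _ _).2 h4
    · rw [hef, coeff_monomial_mul, one_mul]; exact h1
    · intro m' hm'
      rw [coeff_monomial_mul'] at hm'
      split_ifs at hm' with hle
      · rw [one_mul] at hm'
        have h6 := h2 _ hm'
        obtain ⟨m'', rfl⟩ := exists_add_of_le hle
        rw [add_tsub_cancel_left] at h6
        rw [hef]
        exact add_le_add_right h6 (toLex (CL.ef n c))
      · exact absurd rfl hm'
  have hPb : ∀ w, ¬ CL.InBox hp a w → P w := by
    intro w hw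
    unfold CL.InBox at hw
    push Not at hw
    obtain ⟨i, hi⟩ := hw
    exact hmonlead I (CL.ef n w) (hpowmem I _ _ _ (hpow i) hi)
  obtain ⟨T, hTup, hTb, hTc, hTlex⟩ := CL.combinatorial hp a hmono P hP hPb
  have hmemL : ∀ f : MvPolynomial (Fin n) K,
      f ∈ Ideal.span ((fun u => monomial u (1 : K)) '' {u : Fin n →₀ ℕ | T u}) ↔
        ∀ m ∈ f.support, T m := by
    intro f
    rw [mem_ideal_span_monomial_image]
    constructor
    · intro h m hm
      obtain ⟨s, hs, hsm⟩ := h m hm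
      exact hTup s m hsm hs
    · intro h m hm
      exact ⟨m, h m hm, le_rfl⟩
  set L := Ideal.span ((fun u => monomial u (1 : K)) '' {u : Fin n →₀ ℕ | T u}) with hL
  have hmonL : ∀ u : Fin n →₀ ℕ, monomial u (1 : K) ∈ L ↔ T u := by
    intro u
    rw [hmemL]
    simp [support_monomial]
  refine ⟨L, ⟨_, hL⟩, ?_, ?_, ?_⟩
  · intro i
    rw [X_pow_eq_monomial, hmonL]
    apply hTb
    intro h
    have := h i
    simp at this
  · intro d
    have h1 : hilb I d = _ := CL.finrank_count (W I d) d P (by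
      intro w
      constructor
      · intro h
        have hd : ∑ i, w i = d := by
          obtain ⟨f, hf, h1, h2⟩ := h
          exact hsum (CL.ef n w) d f hf.2 h1
        refine ⟨hd, ?_⟩
        rw [hPdef]
        simp only [hd]
        exact h
      · rintro ⟨rfl, h⟩
        exact h)
    have h2 : hilb L d = _ := CL.finrank_count (W L d) d T (by
      intro w
      constructor
      · rintro ⟨f, hf, h1, h2⟩
        exact ⟨hsum (CL.ef n w) d f hf.2 h1, (hmemL f).1 hf.1 _ (mem_support_iff.2 h1)⟩
      · rintro ⟨rfl, h⟩
        exact hmonlead L (CL.ef n w) ((hmonL _).2 h))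
    rw [h1, h2]
    exact hTc d
  · intro u v hs hu hv huL hlex hvL
    rw [hmonL] at huL hvL
    refine hTlex u v hs hu hv huL ?_ hvL
    obtain ⟨i, h1, h2⟩ := hlex
    exact (CL.lex_lt_iff _ _).2 ⟨i, fun j hj => (h2 j hj).symm, h1⟩
end
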